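/- arXiv:2302.07841 — 3 statements merged into one kernel-verified Lean document; each statement's English description precedes it below -/
import Mathlib

section
/- Let ρ be an n-qudit state that is not a minimal stabilizer-projection state. Let R_P(ρ) = |{(p⃗,q⃗) ∈ V^n : Ξ_ρ(p⃗,q⃗) ≠ 0}| (the Pauli rank of ρ) and let K = |{(p⃗,q⃗) ∈ V^n : |Ξ_ρ(p⃗,q⃗)| = 1}|. Then 0 ≤ MG(ρ) ≤ 1 − sqrt( (d^n Tr[ρ²] − K) / (R_P(ρ) − K) ). -/
open scoped BigOperators ComplexOrder Classical ENNReal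
open Matrix

namespace PaperQI

/-- The computational-basis index set `ℤ_d^n` for an `n`-qudit system. -/
abbrev QV (d n : ℕ) := Fin n → ZMod d

/-- Matrices (linear operators) on the `n`-qudit Hilbert space `(ℂ^d)^{⊗ n}`,
written in the computational basis indexed by `ℤ_d^n`. -/
abbrev Mat (d n : ℕ) := Matrix (QV d n) (QV d n) ℂ

/-- The character `ξ^z = exp(2πi z/d)` for `z ∈ ℤ_d`. -/
noncomputable def ch (d : ℕ) (z : ZMod d) : ℂ :=
  Complex.exp (2 * Real.pi * Complex.I * (z.val : ℂ) / (d : ℂ))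

/-- Dot product on `ℤ_d^n`. -/
def qdot {d n : ℕ} (p k : QV d n) : ZMod d := ∑ i, p i * k i

/-- The `n`-qudit Weyl operator `w(p,q) = ⊗_i ξ^{-2⁻¹ p_i q_i} Z^{p_i} X^{q_i}`
(for odd prime `d`).  Its matrix entries are
`w(p,q)[k+q, k] = ξ^{p·k + 2⁻¹ p·q}`. -/
noncomputable def weyl (d n : ℕ) [Fact (Nat.Prime d)] (p q : QV d n) : Mat d n :=
  Matrix.of fun k' k =>
    if k' = k + q then ch d (qdot p k + (2 : ZMod d)⁻¹ * qdot p q) else 0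

/-- `ρ` is an `n`-qudit state: positive semidefinite with trace one. -/
def IsState (d n : ℕ) [Fact (Nat.Prime d)] (ρ : Mat d n) : Prop :=
  ρ.PosSemidef ∧ ρ.trace = 1

/-- The characteristic function `Ξ_ρ(p,q) = Tr[ρ w(-p,-q)]`. -/
noncomputable def xi (d n : ℕ) [Fact (Nat.Prime d)] (ρ : Mat d n)
    (pq : QV d n × QV d n) : ℂ :=
  (ρ * weyl d n (-pq.1) (-pq.2)).trace

/-- The mean state `M(ρ) = d^{-n} ∑_{|Ξ_ρ(p,q)| = 1} Ξ_ρ(p,q) w(p,q)`. -/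
noncomputable def meanState (d n : ℕ) [Fact (Nat.Prime d)] (ρ : Mat d n) : Mat d n :=
  ((d : ℂ) ^ n)⁻¹ •
    ∑ pq : QV d n × QV d n,
      if ‖xi d n ρ pq‖ = 1 then xi d n ρ pq • weyl d n pq.1 pq.2 else 0

/-- `ρ` is a minimal stabilizer-projection state (MSPS): for some `r ≤ n` there are
mutually commuting Weyl operators `w(p_i,q_i)`, `i = 1,…,r`, whose labels generate a
subgroup of `V^n` of order `d^r`, and phases `x ∈ ℤ_d^r`, such that
`ρ = d^{-(n-r)} ∏_i ( (1/d) ∑_{k ∈ ℤ_d} (ξ^{x_i} w(p_i,q_i))^k )`. -/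
noncomputable def IsMSPS (d n : ℕ) [Fact (Nat.Prime d)] (ρ : Mat d n) : Prop :=
  ∃ r : ℕ, r ≤ n ∧
    ∃ (p q : Fin r → QV d n) (x : Fin r → ZMod d),
      (∀ i j, Commute (weyl d n (p i) (q i)) (weyl d n (p j) (q j))) ∧
      Nat.card (AddSubgroup.closure (Set.range fun i => (p i, q i)) :
        AddSubgroup (QV d n × QV d n)) = d ^ r ∧
      ρ = ((d : ℂ) ^ (n - r))⁻¹ •
        (List.ofFn fun i =>
          (d : ℂ)⁻¹ • ∑ k : ZMod d, (ch d (x i) • weyl d n (p i) (q i)) ^ k.val).prod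

/-- The magic gap `MG(ρ) = 1 - max{|Ξ_ρ(p,q)| : Ξ_ρ(p,q) ≠ 0, |Ξ_ρ(p,q)| ≠ 1}`,
and `MG(ρ) = 0` if this set is empty. -/
noncomputable def magicGap (d n : ℕ) [Fact (Nat.Prime d)] (ρ : Mat d n) : ℝ :=
  let s : Finset ℝ :=
    (Finset.univ.filter fun pq : QV d n × QV d n =>
      xi d n ρ pq ≠ 0 ∧ ‖xi d n ρ pq‖ ≠ 1).image
      fun pq => ‖xi d n ρ pq‖
  if h : s.Nonempty then 1 - s.max' h else 0

/-- Von Neumann entropy `H(ρ) = -∑ λ_i log λ_i` (natural log, eigenvalues of `ρ`),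
with the convention `0 log 0 = 0`; junk value `0` on non-Hermitian matrices. -/
noncomputable def vnEnt {d n : ℕ} [Fact (Nat.Prime d)] (ρ : Mat d n) : ℝ :=
  if h : ρ.IsHermitian then -∑ i, h.eigenvalues i * Real.log (h.eigenvalues i) else 0

/-- Rényi entropy `H_α` for `α ∈ [0,∞]`:  `H_0 = log rank`, `H_1 = H` (von Neumann),
`H_∞ = -log λ_max`, and `H_α = (1-α)⁻¹ log ∑ λ_i^α` otherwise. -/
noncomputable def renyiEnt {d n : ℕ} [Fact (Nat.Prime d)] (α : ℝ≥0∞) (ρ : Mat d n) : ℝ :=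
  if h : ρ.IsHermitian then
    if α = 0 then Real.log (ρ.rank : ℝ)
    else if α = 1 then -∑ i, h.eigenvalues i * Real.log (h.eigenvalues i)
    else if α = ⊤ then -Real.log (⨆ i, h.eigenvalues i)
    else (1 - α.toReal)⁻¹ * Real.log (∑ i, h.eigenvalues i ^ α.toReal)
  else 0

/-- Matrix logarithm on the support: `log ρ = U diag(log λ_i) U†` via the spectral
decomposition, with `log 0 = 0` on the kernel; junk value `0` off Hermitian matrices. -/
noncomputable def matLog {d n : ℕ} [Fact (Nat.Prime d)] (ρ : Mat d n) : Mat d n :=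
  if h : ρ.IsHermitian then
    (h.eigenvectorUnitary : Mat d n) *
      Matrix.diagonal (fun i => (Real.log (h.eigenvalues i) : ℂ)) *
      star (h.eigenvectorUnitary : Mat d n)
  else 0

/-- Matrix real power on the support: `ρ^t = U diag(λ_i^t) U†`, with `0^t = 0` on the
kernel (for `t ≠ 0`); junk value `0` off Hermitian matrices. -/
noncomputable def matRpow {d n : ℕ} [Fact (Nat.Prime d)] (ρ : Mat d n) (t : ℝ) : Mat d n :=
  if h : ρ.IsHermitian then
    (h.eigenvectorUnitary : Mat d n) *
      Matrix.diagonal (fun i => ((h.eigenvalues i ^ t : ℝ) : ℂ)) *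
      star (h.eigenvectorUnitary : Mat d n)
  else 0

/-- Support inclusion `supp ρ ⊆ supp σ`, expressed as `ker σ ⊆ ker ρ`
(the correct notion for positive semidefinite matrices). -/
def suppLE {d n : ℕ} [Fact (Nat.Prime d)] (ρ σ : Mat d n) : Prop :=
  ∀ v : QV d n → ℂ, σ.mulVec v = 0 → ρ.mulVec v = 0

/-- Relative entropy `D(ρ‖σ) = Tr[ρ(log ρ - log σ)]` when `supp ρ ⊆ supp σ`, else `+∞`. -/
noncomputable def relEnt {d n : ℕ} [Fact (Nat.Prime d)] (ρ σ : Mat d n) : EReal :=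
  if suppLE ρ σ then (((ρ * (matLog ρ - matLog σ)).trace.re : ℝ) : EReal) else ⊤

/-- Sandwiched Rényi relative entropy
`D_α(ρ‖σ) = (α-1)⁻¹ log Tr[(σ^{(1-α)/(2α)} ρ σ^{(1-α)/(2α)})^α]` for `α ≠ 1`
(with `+∞` when `supp ρ ⊄ supp σ`), and `D_1 = D` the relative entropy. -/
noncomputable def sandRenyi {d n : ℕ} [Fact (Nat.Prime d)] (α : ℝ) (ρ σ : Mat d n) :
    EReal :=
  if α = 1 then relEnt ρ σ
  else if suppLE ρ σ then
    let x : ℝ := (α - 1)⁻¹ * Real.log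
      ((matRpow (matRpow σ ((1 - α) / (2 * α)) * ρ * matRpow σ ((1 - α) / (2 * α)))
        α).trace.re)
    (x : EReal)
  else ⊤

/-- The key unitary `U|i,j⟩ = |N g₁₁ i - N g₁₀ j, -N g₀₁ i + N g₀₀ j⟩`,
where `N = (det G)⁻¹` in `ℤ_d`. -/
noncomputable def convU (d n : ℕ) [Fact (Nat.Prime d)] (g00 g01 g10 g11 : ZMod d) :
    Matrix (QV d n × QV d n) (QV d n × QV d n) ℂ :=
  Matrix.of fun kl ij =>
    if kl = ((fun a => (g00 * g11 - g01 * g10)⁻¹ * g11 * ij.1 a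
                      - (g00 * g11 - g01 * g10)⁻¹ * g10 * ij.2 a : QV d n),
             (fun a => -((g00 * g11 - g01 * g10)⁻¹ * g01) * ij.1 a
                      + (g00 * g11 - g01 * g10)⁻¹ * g00 * ij.2 a : QV d n))
    then 1 else 0

/-- Tensor (Kronecker) product of two `n`-qudit operators, on the doubled system. -/
def kron {d n : ℕ} (ρ σ : Mat d n) : Matrix (QV d n × QV d n) (QV d n × QV d n) ℂ :=
  Matrix.of fun ij kl => ρ ij.1 kl.1 * σ ij.2 kl.2

/-- Partial trace over the second `n`-qudit factor. -/
noncomputable def ptrB {d n : ℕ} [Fact (Nat.Prime d)]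
    (M : Matrix (QV d n × QV d n) (QV d n × QV d n) ℂ) : Mat d n :=
  Matrix.of fun i i' => ∑ j : QV d n, M (i, j) (i', j)

/-- The convolution `ρ ⊠ σ = Tr_B[U (ρ ⊗ σ) U†]` with parameter matrix
`G = [g₀₀, g₀₁; g₁₀, g₁₁]`. -/
noncomputable def conv (d n : ℕ) [Fact (Nat.Prime d)] (g00 g01 g10 g11 : ZMod d)
    (ρ σ : Mat d n) : Mat d n :=
  ptrB (convU d n g00 g01 g10 g11 * kron ρ σ * (convU d n g00 g01 g10 g11)ᴴ)

/-- The beam-splitter unitary `U_{s,t}|i,j⟩ = |s i + t j, t i - s j⟩`. -/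
noncomputable def bsU (d n : ℕ) [Fact (Nat.Prime d)] (s t : ZMod d) :
    Matrix (QV d n × QV d n) (QV d n × QV d n) ℂ :=
  Matrix.of fun kl ij =>
    if kl = ((fun a => s * ij.1 a + t * ij.2 a : QV d n),
             (fun a => t * ij.1 a - s * ij.2 a : QV d n))
    then 1 else 0

/-- The beam-splitter convolution `ρ ⊠_{s,t} σ = Tr_B[U_{s,t} (ρ ⊗ σ) U_{s,t}†]`. -/
noncomputable def bsConv (d n : ℕ) [Fact (Nat.Prime d)] (s t : ZMod d)
    (ρ σ : Mat d n) : Mat d n :=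
  ptrB (bsU d n s t * kron ρ σ * (bsU d n s t)ᴴ)

/-- Iterated self-convolution: `⊠^0 ρ = ρ` and `⊠^{N+1} ρ = (⊠^N ρ) ⊠ ρ`. -/
noncomputable def bsIter (d n : ℕ) [Fact (Nat.Prime d)] (s t : ZMod d) :
    ℕ → Mat d n → Mat d n
  | 0, ρ => ρ
  | N + 1, ρ => bsConv d n s t (bsIter d n s t N ρ) ρ

/-- `ρ` is the pure stabilizer state `|ψ⟩⟨ψ|` with stabilizer label group `S ⊆ V^n`:
`S` has order `d^n` and `ψ` is a common eigenvector of all `w(p,q)`, `(p,q) ∈ S`. -/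
noncomputable def IsPureStabilizerWithGroup (d n : ℕ) [Fact (Nat.Prime d)]
    (ρ : Mat d n) (S : AddSubgroup (QV d n × QV d n)) : Prop :=
  Nat.card S = d ^ n ∧
    ∃ ψ : QV d n → ℂ, ψ ≠ 0 ∧
      ρ = Matrix.of (fun a b => ψ a * starRingEnd ℂ (ψ b)) ∧
      ∀ pq ∈ S, ∃ c : ℂ, (weyl d n pq.1 pq.2).mulVec ψ = c • ψ

/-- `ρ` is a pure stabilizer state. -/
noncomputable def IsPureStabilizer (d n : ℕ) [Fact (Nat.Prime d)] (ρ : Mat d n) : Prop :=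
  ∃ S : AddSubgroup (QV d n × QV d n), IsPureStabilizerWithGroup d n ρ S

/-- `ρ` is a stabilizer state: a convex combination of pure stabilizer states. -/
noncomputable def IsStabilizerState (d n : ℕ) [Fact (Nat.Prime d)] (ρ : Mat d n) : Prop :=
  ∃ (m : ℕ) (p : Fin m → ℝ) (τ : Fin m → Mat d n),
    (∀ i, 0 ≤ p i) ∧ ∑ i, p i = 1 ∧ (∀ i, IsPureStabilizer d n (τ i)) ∧
    ρ = ∑ i, (p i : ℂ) • τ i

/-- `U` is a Clifford unitary: a unitary mapping each Weyl operator, under conjugation,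
to a complex phase times a Weyl operator. -/
noncomputable def IsClifford (d n : ℕ) [Fact (Nat.Prime d)] (U : Mat d n) : Prop :=
  U ∈ Matrix.unitaryGroup (QV d n) ℂ ∧
    ∀ pq : QV d n × QV d n, ∃ (c : ℂ) (pq' : QV d n × QV d n),
      ‖c‖ = 1 ∧ U * weyl d n pq.1 pq.2 * Uᴴ = c • weyl d n pq'.1 pq'.2

/-- The divergence-based quantum Fisher information `J(ρ; H) = Tr[ρ [H,[H, log ρ]]]`. -/
noncomputable def fisherJ {d n : ℕ} [Fact (Nat.Prime d)] (ρ H : Mat d n) : ℝ :=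
  (ρ * (H * (H * matLog ρ - matLog ρ * H) - (H * matLog ρ - matLog ρ * H) * H)).trace.re

/-- Embed a single-qudit operator at site `k` of an `n`-qudit system
(tensored with the identity elsewhere). -/
noncomputable def embedAt (d n : ℕ) (k : Fin n) (M : Matrix (ZMod d) (ZMod d) ℂ) :
    Mat d n :=
  Matrix.of fun v w => if ∀ i, i ≠ k → v i = w i then M (v k) (w k) else 0

/-- The rank-one projection `H_j^Z = |j⟩⟨j|` onto the eigenvector of `Z`
with eigenvalue `ξ^j`. -/
noncomputable def projZ (d : ℕ) (j : ZMod d) : Matrix (ZMod d) (ZMod d) ℂ :=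
  Matrix.of fun a b => if a = j ∧ b = j then 1 else 0

/-- The rank-one projection `H_j^X` onto the eigenvector of `X` with eigenvalue `ξ^j`;
its entries are `(H_j^X)_{a b} = d⁻¹ ξ^{j(b-a)}`. -/
noncomputable def projX (d : ℕ) (j : ZMod d) : Matrix (ZMod d) (ZMod d) ℂ :=
  Matrix.of fun a b => (d : ℂ)⁻¹ * ch d (j * (b - a))

/-- Total Fisher information
`J(ρ) = ∑_{k=1}^n ∑_{j ∈ ℤ_d} J(ρ; H_j^{X_k}) + J(ρ; H_j^{Z_k})`. -/
noncomputable def fisherTotal (d n : ℕ) [Fact (Nat.Prime d)] (ρ : Mat d n) : ℝ :=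
  ∑ k : Fin n, ∑ j : ZMod d,
    (fisherJ ρ (embedAt d n k (projX d j)) + fisherJ ρ (embedAt d n k (projZ d j)))

/-- Holevo capacity of a channel `E`:
`χ(E) = sup H(∑ p_i E(ρ_i)) - ∑ p_i H(E(ρ_i))` over finite ensembles of states. -/
noncomputable def holevoCap (d n : ℕ) [Fact (Nat.Prime d)] (E : Mat d n → Mat d n) : ℝ :=
  ⨆ m : ℕ, ⨆ p : Fin m → ℝ, ⨆ ρs : Fin m → Mat d n,
    ⨆ _ : (∀ i, 0 ≤ p i) ∧ ∑ i, p i = 1 ∧ ∀ i, IsState d n (ρs i),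
      (vnEnt (∑ i, (p i : ℂ) • E (ρs i)) - ∑ i, p i * vnEnt (E (ρs i)))

/-- Hilbert–Schmidt norm `‖A‖₂ = (Tr[A†A])^{1/2}`. -/
noncomputable def hsNorm {d n : ℕ} [Fact (Nat.Prime d)] (A : Mat d n) : ℝ :=
  Real.sqrt ((Aᴴ * A).trace.re)

/-- Trace norm `‖A‖₁ = Tr[(A†A)^{1/2}]`. -/
noncomputable def trNorm {d n : ℕ} [Fact (Nat.Prime d)] (A : Mat d n) : ℝ :=
  (matRpow (Aᴴ * A) (2⁻¹ : ℝ)).trace.re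

/-- Tensor product of an `n₁`-qudit operator with an `n₂`-qudit operator,
as an `(n₁+n₂)`-qudit operator. -/
def tensorMat (d n₁ n₂ : ℕ) (ρ₁ : Mat d n₁) (ρ₂ : Mat d n₂) : Mat d (n₁ + n₂) :=
  Matrix.of fun v w =>
    ρ₁ (fun i => v (Fin.castAdd n₂ i)) (fun i => w (Fin.castAdd n₂ i)) *
    ρ₂ (fun j => v (Fin.natAdd n₁ j)) (fun j => w (Fin.natAdd n₁ j))

/-! ### Qubit (`d = 2`) specific definitions -/

/-- The `n`-qubit Weyl (Pauli) operator `w(p,q) = ⊗_i i^{-p_i q_i} Z^{p_i} X^{q_i}`. -/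
noncomputable def weyl2 (n : ℕ) (p q : Fin n → ZMod 2) :
    Matrix (Fin n → ZMod 2) (Fin n → ZMod 2) ℂ :=
  Matrix.of fun k' k =>
    if k' = k + q then
      ∏ i, ((-Complex.I) ^ ((p i).val * (q i).val) *
        (-1 : ℂ) ^ ((p i * (k i + q i)).val))
    else 0

/-- The `n`-qubit characteristic function `Ξ_ρ(p,q) = Tr[ρ w(p,q)†]`. -/
noncomputable def xi2 (n : ℕ) (ρ : Matrix (Fin n → ZMod 2) (Fin n → ZMod 2) ℂ)
    (pq : (Fin n → ZMod 2) × (Fin n → ZMod 2)) : ℂ :=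
  (ρ * (weyl2 n pq.1 pq.2)ᴴ).trace

/-- The logarithmic magic gap
`LMG(ρ) = -log₂ max{|Ξ_ρ(p,q)| : Ξ_ρ(p,q) ≠ 0, |Ξ_ρ(p,q)| ≠ 1}` (`0` if the set is
empty). -/
noncomputable def lmg (n : ℕ) (ρ : Matrix (Fin n → ZMod 2) (Fin n → ZMod 2) ℂ) : ℝ :=
  let s : Finset ℝ :=
    (Finset.univ.filter fun pq : (Fin n → ZMod 2) × (Fin n → ZMod 2) =>
      xi2 n ρ pq ≠ 0 ∧ ‖xi2 n ρ pq‖ ≠ 1).image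
      fun pq => ‖xi2 n ρ pq‖
  if h : s.Nonempty then -Real.logb 2 (s.max' h) else 0

/-- `U` is an `n`-qubit Clifford unitary. -/
noncomputable def IsClifford2 (n : ℕ) (U : Matrix (Fin n → ZMod 2) (Fin n → ZMod 2) ℂ) :
    Prop :=
  U ∈ Matrix.unitaryGroup (Fin n → ZMod 2) ℂ ∧
    ∀ pq : (Fin n → ZMod 2) × (Fin n → ZMod 2),
      ∃ (c : ℂ) (pq' : (Fin n → ZMod 2) × (Fin n → ZMod 2)),
        ‖c‖ = 1 ∧ U * weyl2 n pq.1 pq.2 * Uᴴ = c • weyl2 n pq'.1 pq'.2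

/-- The T gate `diag(1, e^{iπ/4})` acting on qubit `k` of an `n`-qubit system. -/
noncomputable def tGateAt (n : ℕ) (k : Fin n) :
    Matrix (Fin n → ZMod 2) (Fin n → ZMod 2) ℂ :=
  embedAt 2 n k (Matrix.of fun a b =>
    if a = b then (if a = 0 then 1 else Complex.exp (Real.pi * Complex.I / 4)) else 0)

/-- An `n`-qubit state: positive semidefinite with trace one. -/
def IsState2 (n : ℕ) (ρ : Matrix (Fin n → ZMod 2) (Fin n → ZMod 2) ℂ) : Prop :=
  ρ.PosSemidef ∧ ρ.trace = 1

end PaperQI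

namespace PaperQI

theorem ch_eq (d : ℕ) [Fact (Nat.Prime d)] (z : ZMod d) : ch d z = ZMod.stdAddChar z := by
  rw [ZMod.stdAddChar_apply, ZMod.toCircle_apply]
  rfl

theorem ch_norm (d : ℕ) [Fact (Nat.Prime d)] (z : ZMod d) : ‖ch d z‖ = 1 := by
  rw [ch_eq, AddChar.norm_apply]

theorem ch_add (d : ℕ) [Fact (Nat.Prime d)] (a b : ZMod d) :
    ch d (a + b) = ch d a * ch d b := by
  simp only [ch_eq, AddChar.map_add_eq_mul]

theorem ch_conj (d : ℕ) [Fact (Nat.Prime d)] (a : ZMod d) :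
    (starRingEnd ℂ) (ch d a) = ch d (-a) := by
  simp only [ch_eq, AddChar.map_neg_eq_conj]

theorem ch_orth (d n : ℕ) [Fact (Nat.Prime d)] (m : QV d n) :
    ∑ p : QV d n, ch d (qdot p m) = if m = 0 then (d : ℂ) ^ n else 0 := by
  have h1 : ∀ p : QV d n, ch d (qdot p m) = ∏ i, ZMod.stdAddChar (p i * m i) := by
    intro p
    rw [ch_eq, qdot]
    exact map_prod (AddChar.toMonoidHom (ZMod.stdAddChar (N := d))) (fun i => Multiplicative.ofAdd (p i * m i)) _
  simp_rw [h1]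
  have h2 := (Finset.prod_univ_sum (fun _ : Fin n => (Finset.univ : Finset (ZMod d)))
    (fun i x => (ZMod.stdAddChar (x * m i) : ℂ)))
  rw [Fintype.piFinset_univ] at h2
  rw [← h2]
  have h3 : ∀ i, ∑ x : ZMod d, (ZMod.stdAddChar (x * m i) : ℂ)
      = if m i = 0 then (d : ℂ) else 0 := by
    intro i
    have := AddChar.sum_mulShift (m i) (ZMod.isPrimitive_stdAddChar d)
    rw [this, ZMod.card]
    split_ifs <;> simp
  simp_rw [h3]
  split_ifs with hm
  · simp [hm]
  · obtain ⟨i, hi⟩ := Function.ne_iff.mp hm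
    exact Finset.prod_eq_zero (Finset.mem_univ i) (if_neg hi)

theorem xi_eq (d n : ℕ) [Fact (Nat.Prime d)] (ρ : Mat d n) (p q : QV d n) :
    xi d n ρ (p, q) = ch d ((2 : ZMod d)⁻¹ * qdot p q) *
      ∑ k, ρ k (k - q) * ch d (-qdot p k) := by
  have e : ∀ k : QV d n, qdot (-p) k = -qdot p k := by
    intro k; simp [qdot]
  have e2 : qdot (-p) (-q) = qdot p q := by simp [qdot]
  simp only [xi, Matrix.trace, Matrix.diag, Matrix.mul_apply, weyl, Matrix.of_apply,
    mul_ite, mul_zero, Finset.sum_ite_eq', Finset.mem_univ, if_true]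
  rw [Finset.mul_sum]
  refine Finset.sum_congr rfl fun k _ => ?_
  rw [e, e2, ch_add, ← sub_eq_add_neg]
  ring

theorem parseval1 (d n : ℕ) [Fact (Nat.Prime d)] (a : QV d n → ℂ) :
    ∑ p : QV d n, ‖∑ k, a k * ch d (-qdot p k)‖ ^ 2 = (d : ℝ) ^ n * ∑ k, ‖a k‖ ^ 2 := by
  apply Complex.ofReal_injective
  push_cast
  simp_rw [← Complex.mul_conj']
  have h : ∀ p : QV d n, (∑ k, a k * ch d (-qdot p k)) *
      (starRingEnd ℂ) (∑ k, a k * ch d (-qdot p k)) =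
      ∑ k, ∑ l, a k * (starRingEnd ℂ) (a l) * ch d (qdot p (l - k)) := by
    intro p
    rw [map_sum, Finset.sum_mul_sum]
    refine Finset.sum_congr rfl fun k _ => Finset.sum_congr rfl fun l _ => ?_
    have : qdot p (l - k) = -qdot p k + -(-qdot p l) := by
      simp [qdot, mul_sub]; ring
    rw [this, ch_add, map_mul, ch_conj]
    ring
  simp_rw [h]
  rw [Finset.sum_comm, Finset.mul_sum]
  refine Finset.sum_congr rfl fun k _ => ?_
  rw [Finset.sum_comm]
  simp_rw [← Finset.mul_sum, ch_orth, sub_eq_zero]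
  simp
  ring

theorem parseval (d n : ℕ) [Fact (Nat.Prime d)] (ρ : Mat d n) (h : ρ.IsHermitian) :
    ∑ pq : QV d n × QV d n, ‖xi d n ρ pq‖ ^ 2 = (d : ℝ) ^ n * (ρ * ρ).trace.re := by
  rw [Fintype.sum_prod_type_right]
  have h1 : ∀ q : QV d n, ∑ p : QV d n, ‖xi d n ρ (p, q)‖ ^ 2
      = (d : ℝ) ^ n * ∑ k, ‖ρ k (k - q)‖ ^ 2 := by
    intro q
    rw [← parseval1]
    refine Finset.sum_congr rfl fun p _ => ?_
    rw [xi_eq, norm_mul, ch_norm, one_mul]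
  simp_rw [h1]
  rw [← Finset.mul_sum, Finset.sum_comm]
  congr 1
  simp only [Matrix.trace, Matrix.diag, Matrix.mul_apply, Complex.re_sum]
  refine Finset.sum_congr rfl fun k _ => ?_
  rw [← Equiv.sum_comp (Equiv.subLeft k) (fun l => (ρ k l * ρ l k).re)]
  refine Finset.sum_congr rfl fun q _ => ?_
  rw [Equiv.subLeft_apply, ← h.apply (k - q) k]
  change _ = (_ * (starRingEnd ℂ) _).re
  rw [Complex.mul_conj']
  norm_cast

theorem entry_bound {d n : ℕ} [Fact (Nat.Prime d)] (ρ : Mat d n) (h : ρ.PosSemidef)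
    (k l : QV d n) : ‖ρ k l‖ ≤ ((ρ k k).re + (ρ l l).re) / 2 := by
  obtain ⟨B, hB⟩ : ∃ B : Mat d n, ρ = Bᴴ * B := by
    open scoped MatrixOrder in
    exact CStarAlgebra.nonneg_iff_eq_star_mul_self.mp h.nonneg
  subst hB
  have hd : ∀ k, ((Bᴴ * B) k k).re = ∑ j, ‖B j k‖ ^ 2 := by
    intro k
    simp only [Matrix.mul_apply, Complex.re_sum, Matrix.conjTranspose_apply]
    refine Finset.sum_congr rfl fun j _ => ?_
    change ((starRingEnd ℂ) _ * _).re = _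
    rw [Complex.conj_mul']
    norm_cast
  rw [hd, hd, Matrix.mul_apply, ← Finset.sum_add_distrib, Finset.sum_div]
  refine norm_sum_le_of_le _ fun j _ => ?_
  rw [norm_mul, Matrix.conjTranspose_apply, norm_star]
  nlinarith [sq_nonneg (‖B j k‖ - ‖B j l‖)]

theorem xi_le (d n : ℕ) [Fact (Nat.Prime d)] (ρ : Mat d n) (h : IsState d n ρ)
    (pq : QV d n × QV d n) : ‖xi d n ρ pq‖ ≤ 1 := by
  obtain ⟨p, q⟩ := pq
  rw [xi_eq, norm_mul, ch_norm, one_mul]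
  have ht : ∑ k, (ρ k k).re = 1 := by
    have := congrArg Complex.re h.2
    simpa [Matrix.trace] using this
  have ht2 : ∑ k, (ρ (k - q) (k - q)).re = 1 := by
    rw [← ht]
    exact Equiv.sum_comp (Equiv.subRight q) (fun k => (ρ k k).re)
  calc _ ≤ ∑ k, ((ρ k k).re + (ρ (k - q) (k - q)).re) / 2 := by
        refine norm_sum_le_of_le _ fun k _ => ?_
        rw [norm_mul, ch_norm, mul_one]
        exact entry_bound ρ h.1 _ _
    _ = 1 := by
        rw [← Finset.sum_div, Finset.sum_add_distrib, ht, ht2]; norm_num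

/-- If the `n`-qudit state `ρ` is not an MSPS, then with
`R_P(ρ) = |{(p,q) : Ξ_ρ(p,q) ≠ 0}|` and `K = |{(p,q) : |Ξ_ρ(p,q)| = 1}|`,
`0 ≤ MG(ρ) ≤ 1 - sqrt((d^n Tr[ρ²] - K)/(R_P(ρ) - K))`. -/
theorem statement5 (d n : ℕ) [Fact (Nat.Prime d)] (hd : Odd d) (hn : 1 ≤ n)
    (ρ : Mat d n) (hρ : IsState d n ρ) (hnot : ¬ IsMSPS d n ρ) :
    0 ≤ magicGap d n ρ ∧
    magicGap d n ρ ≤ 1 - Real.sqrt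
      (((d : ℝ) ^ n * (ρ * ρ).trace.re -
          ((Finset.univ.filter fun pq : QV d n × QV d n =>
              ‖xi d n ρ pq‖ = 1).card : ℝ)) /
        (((Finset.univ.filter fun pq : QV d n × QV d n =>
              xi d n ρ pq ≠ 0).card : ℝ) -
          ((Finset.univ.filter fun pq : QV d n × QV d n =>
              ‖xi d n ρ pq‖ = 1).card : ℝ))) := by
  have hP := parseval d n ρ hρ.1.isHermitian
  have hle := xi_le d n ρ hρ
  rw [← hP]
  set A := Finset.univ.filter fun pq : QV d n × QV d n => ‖xi d n ρ pq‖ = 1 with hA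
  set R := Finset.univ.filter fun pq : QV d n × QV d n => xi d n ρ pq ≠ 0 with hR
  set T := Finset.univ.filter fun pq : QV d n × QV d n =>
      xi d n ρ pq ≠ 0 ∧ ‖xi d n ρ pq‖ ≠ 1 with hT
  have hRAT : R = A ∪ T := by
    ext pq
    simp only [hR, hA, hT, Finset.mem_union, Finset.mem_filter, Finset.mem_univ, true_and]
    constructor
    · intro h
      by_cases h1 : ‖xi d n ρ pq‖ = 1
      · exact Or.inl h1
      · exact Or.inr ⟨h, h1⟩
    · rintro (h | h)
      · intro h0
        rw [h0, norm_zero] at h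
        exact zero_ne_one h
      · exact h.1
  have hdisj : Disjoint A T := by
    rw [Finset.disjoint_left]
    intro pq h1 h2
    simp only [hA, hT, Finset.mem_filter, Finset.mem_univ, true_and] at h1 h2
    exact h2.2 h1
  have hcard : (R.card : ℝ) - A.card = T.card := by
    rw [hRAT, Finset.card_union_of_disjoint hdisj]; push_cast; ring
  have hsum : ∑ pq, ‖xi d n ρ pq‖ ^ 2 - (A.card : ℝ) = ∑ pq ∈ T, ‖xi d n ρ pq‖ ^ 2 := by
    have h1 : ∑ pq, ‖xi d n ρ pq‖ ^ 2 = ∑ pq ∈ R, ‖xi d n ρ pq‖ ^ 2 := by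
      symm
      apply Finset.sum_subset (Finset.subset_univ _)
      intro x _ hx
      have : xi d n ρ x = 0 := by simpa [hR] using hx
      simp [this]
    have h2 : ∑ pq ∈ A, ‖xi d n ρ pq‖ ^ 2 = A.card := by
      rw [Finset.sum_congr rfl (g := fun _ => (1 : ℝ))]
      · simp
      · intro x hx
        have : ‖xi d n ρ x‖ = 1 := by simpa [hA] using hx
        rw [this, one_pow]
    rw [h1, hRAT, Finset.sum_union hdisj, h2]; ring
  rw [hcard, hsum]
  simp only [magicGap]
  rw [← hT]
  split_ifs with hne
  · have hmem := Finset.max'_mem _ hne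
    have hmax : ∀ x ∈ T.image fun pq => ‖xi d n ρ pq‖,
        x ≤ (T.image fun pq => ‖xi d n ρ pq‖).max' hne := fun x hx => Finset.le_max' _ x hx
    generalize (T.image fun pq => ‖xi d n ρ pq‖).max' hne = M at *
    obtain ⟨x, hx, rfl⟩ := Finset.mem_image.mp hmem
    refine ⟨by linarith [hle x], ?_⟩
    apply sub_le_sub_left
    apply Real.sqrt_le_iff.mpr
    refine ⟨norm_nonneg _, ?_⟩
    have hpos : (0 : ℝ) < T.card := by exact_mod_cast Finset.card_pos.mpr ⟨x, hx⟩
    rw [div_le_iff₀ hpos]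
    calc _ ≤ ∑ pq ∈ T, ‖xi d n ρ x‖ ^ 2 := by
          refine Finset.sum_le_sum fun y hy => ?_
          exact pow_le_pow_left₀ (norm_nonneg _)
            (hmax _ (Finset.mem_image_of_mem _ hy)) 2
      _ = _ := by rw [Finset.sum_const, nsmul_eq_mul, mul_comm]
  · have hT0 : T = ∅ := by
      simpa [Finset.not_nonempty_iff_eq_empty] using hne
    simp [hT0]

end PaperQI
end

section
/- Monotonicity of relative entropy under convolution: for all n-qudit states ρ, σ, τ, D(ρ ⊠ τ ‖ σ ⊠ τ) ≤ D(ρ ‖ σ). -/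
open scoped BigOperators ComplexOrder Classical ENNReal
open Matrix

namespace PaperQI

section Helpers

open Filter Topology

lemma h12_deriv (w p q : ℝ) (hp : 0 ≤ p) (hq : 0 ≤ q)
    (hs : q = 0 → p = 0 ∨ w = 0) (t : ℝ) (ht : 0 ≤ t) :
    HasDerivAt (fun t => w * p * Real.log (q + t * p)) (w * (p ^ 2 / (q + t * p))) t := by
  by_cases h0 : p = 0 ∨ w = 0
  · rcases h0 with h | h
    · simpa [h] using hasDerivAt_const t (0 : ℝ)
    · simpa [h] using hasDerivAt_const t (0 : ℝ)
  · have hq0 : q ≠ 0 := fun h => h0 (hs h)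
    have hqp : 0 < q := lt_of_le_of_ne hq (Ne.symm hq0)
    have hpos : 0 < q + t * p := by positivity
    have h1 : HasDerivAt (fun t : ℝ => q + t * p) p t := by
      simpa using ((hasDerivAt_id t).mul_const p).const_add q
    have h2 := (h1.log hpos.ne').const_mul (w * p)
    exact h2.congr_deriv (by ring)

lemma h12_lim (w p q : ℝ) (hp : 0 ≤ p) (hq : 0 ≤ q) :
    Tendsto (fun t : ℝ => w * p * (Real.log (q + t * p) - Real.log t)) atTop
      (𝓝 (w * p * Real.log p)) := by
  by_cases h0 : p = 0
  · simp [h0]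
  have hpp : 0 < p := lt_of_le_of_ne hp (Ne.symm h0)
  apply Tendsto.const_mul
  have h1 : Tendsto (fun t : ℝ => q / t + p) atTop (𝓝 p) := by
    simpa using (tendsto_const_nhds.div_atTop tendsto_id : Tendsto (fun t : ℝ => q / t) atTop (𝓝 0)).add_const p
  have h2 := h1.log h0
  refine h2.congr' ?_
  filter_upwards [eventually_gt_atTop 0] with t ht
  rw [← Real.log_div (by positivity) ht.ne']
  congr 1
  field_simp

lemma h12_real {I J I' J' : Type*} [Fintype I] [Fintype J] [Fintype I'] [Fintype J']
    (w : I → J → ℝ) (p : I → ℝ) (q : J → ℝ)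
    (w' : I' → J' → ℝ) (p' : I' → ℝ) (q' : J' → ℝ)
    (hp : ∀ i, 0 ≤ p i) (hq : ∀ j, 0 ≤ q j) (hp' : ∀ i, 0 ≤ p' i) (hq' : ∀ j, 0 ≤ q' j)
    (h1 : ∑ i, ∑ j, w i j * p i = 1) (h1' : ∑ i, ∑ j, w' i j * p' i = 1)
    (hs : ∀ i j, q j = 0 → p i = 0 ∨ w i j = 0)
    (hs' : ∀ i j, q' j = 0 → p' i = 0 ∨ w' i j = 0)
    (hF : ∀ t : ℝ, 0 < t → ∑ i, ∑ j, w' i j * (p' i ^ 2 / (q' j + t * p' i)) ≤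
      ∑ i, ∑ j, w i j * (p i ^ 2 / (q j + t * p i))) :
    ∑ i, ∑ j, w' i j * p' i * Real.log (p' i) - ∑ i, ∑ j, w' i j * p' i * Real.log (q' j) ≤
    ∑ i, ∑ j, w i j * p i * Real.log (p i) - ∑ i, ∑ j, w i j * p i * Real.log (q j) := by
  set G : ℝ → ℝ := fun t => (∑ i, ∑ j, w i j * p i * Real.log (q j + t * p i)) -
    ∑ i, ∑ j, w' i j * p' i * Real.log (q' j + t * p' i) with hG
  have hd : ∀ t : ℝ, 0 ≤ t → HasDerivAt G
      ((∑ i, ∑ j, w i j * (p i ^ 2 / (q j + t * p i))) -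
        ∑ i, ∑ j, w' i j * (p' i ^ 2 / (q' j + t * p' i))) t := by
    intro t ht
    refine HasDerivAt.sub ?_ ?_
    · exact HasDerivAt.fun_sum fun i _ => HasDerivAt.fun_sum fun j _ =>
        h12_deriv _ _ _ (hp i) (hq j) (hs i j) t ht
    · exact HasDerivAt.fun_sum fun i _ => HasDerivAt.fun_sum fun j _ =>
        h12_deriv _ _ _ (hp' i) (hq' j) (hs' i j) t ht
  have hmono : MonotoneOn G (Set.Ici 0) := by
    apply monotoneOn_of_deriv_nonneg (convex_Ici 0)
    · intro t ht
      exact (hd t ht).continuousAt.continuousWithinAt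
    · intro t ht
      rw [interior_Ici] at ht
      exact (hd t (le_of_lt ht)).differentiableAt.differentiableWithinAt
    · intro t ht
      rw [interior_Ici] at ht
      rw [(hd t (le_of_lt ht)).deriv]
      exact sub_nonneg.2 (hF t ht)
  have hlim : Tendsto G atTop (𝓝 ((∑ i, ∑ j, w i j * p i * Real.log (p i)) -
      ∑ i, ∑ j, w' i j * p' i * Real.log (p' i))) := by
    have hl := (tendsto_finsetSum Finset.univ fun i _ => tendsto_finsetSum Finset.univ fun j _ =>
        h12_lim (w i j) (p i) (q j) (hp i) (hq j))
    have hl' := (tendsto_finsetSum Finset.univ fun i _ => tendsto_finsetSum Finset.univ fun j _ =>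
        h12_lim (w' i j) (p' i) (q' j) (hp' i) (hq' j))
    refine (hl.sub hl').congr fun t => ?_
    have c1 : ∑ i, ∑ j, w i j * p i * Real.log t = Real.log t := by
      have := congrArg (· * Real.log t) h1
      simpa only [Finset.sum_mul, one_mul] using this
    have c2 : ∑ i, ∑ j, w' i j * p' i * Real.log t = Real.log t := by
      have := congrArg (· * Real.log t) h1'
      simpa only [Finset.sum_mul, one_mul] using this
    simp only [mul_sub, Finset.sum_sub_distrib, c1, c2, hG]
    ring
  have h0 : G 0 ≤ _ := ge_of_tendsto hlim (by
    filter_upwards [eventually_ge_atTop 0] with t ht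
    exact hmono (Set.mem_Ici.2 le_rfl) ht ht)
  simp only [hG, zero_mul, add_zero] at h0
  linarith

variable {m k ι : Type*} [Fintype m] [DecidableEq m] [Fintype k] [DecidableEq k] [Fintype ι]

/-- The quadratic functional of the variational formula. -/
noncomputable def h12Q (ρ σ : Matrix m m ℂ) (t : ℝ) (X : Matrix m m ℂ) : ℝ :=
  2 * (Xᴴ * ρ).trace.re - (X * Xᴴ * σ).trace.re - t * (Xᴴ * X * ρ).trace.re

/-- Spectral-type diagonal form. -/
noncomputable def h12D (A : Matrix m m ℂ) (p : m → ℝ) : Matrix m m ℂ :=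
  A * Matrix.diagonal (fun i => (p i : ℂ)) * Aᴴ

lemma h12_tr_diag (x y : Matrix m m ℂ) (p : m → ℝ) :
    (xᴴ * y * Matrix.diagonal (fun i => (p i : ℂ))).trace
      = ∑ i, ∑ j, star (x j i) * y j i * (p i : ℂ) := by
  simp only [Matrix.trace, Matrix.diag_apply, Matrix.mul_diagonal]
  simp only [Matrix.mul_apply, Finset.sum_mul, Matrix.conjTranspose_apply]

lemma h12_Q_eq (A B : Matrix m m ℂ) (hA : Aᴴ * A = 1) (hB : Bᴴ * B = 1)
    (p q : m → ℝ) (t : ℝ) (x : Matrix m m ℂ) :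
    h12Q (h12D A p) (h12D B q) t (B * x * Aᴴ) =
      ∑ i, ∑ j, (2 * (star (x j i) * (Bᴴ * A) j i).re * p i
        - (q j + t * p i) * Complex.normSq (x j i)) := by
  have e1 : ((B * x * Aᴴ)ᴴ * h12D A p).trace =
      (xᴴ * (Bᴴ * A) * Matrix.diagonal (fun i => (p i : ℂ))).trace := by
    rw [h12D, ← Matrix.mul_assoc, Matrix.trace_mul_comm]
    simp only [Matrix.conjTranspose_mul, Matrix.conjTranspose_conjTranspose]
    congr 1
    calc _ = (Aᴴ * A) * xᴴ * (Bᴴ * A) * Matrix.diagonal (fun i => (p i : ℂ)) := by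
            simp only [Matrix.mul_assoc]
      _ = _ := by rw [hA, Matrix.one_mul]
  have e2 : ((B * x * Aᴴ) * (B * x * Aᴴ)ᴴ * h12D B q).trace =
      (xᴴᴴ * xᴴ * Matrix.diagonal (fun i => (q i : ℂ))).trace := by
    rw [h12D, ← Matrix.mul_assoc, Matrix.trace_mul_comm]
    simp only [Matrix.conjTranspose_mul, Matrix.conjTranspose_conjTranspose]
    congr 1
    calc _ = (Bᴴ * B) * x * (Aᴴ * A) * xᴴ * (Bᴴ * B) *
              Matrix.diagonal (fun i => (q i : ℂ)) := by
            simp only [Matrix.mul_assoc]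
      _ = _ := by simp only [hA, hB, Matrix.one_mul, Matrix.mul_one]
  have e3 : ((B * x * Aᴴ)ᴴ * (B * x * Aᴴ) * h12D A p).trace =
      (xᴴ * x * Matrix.diagonal (fun i => (p i : ℂ))).trace := by
    rw [h12D, ← Matrix.mul_assoc, Matrix.trace_mul_comm]
    simp only [Matrix.conjTranspose_mul, Matrix.conjTranspose_conjTranspose]
    congr 1
    calc _ = (Aᴴ * A) * xᴴ * (Bᴴ * B) * x * (Aᴴ * A) *
              Matrix.diagonal (fun i => (p i : ℂ)) := by
            simp only [Matrix.mul_assoc]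
      _ = _ := by simp only [hA, hB, Matrix.one_mul, Matrix.mul_one]
  rw [h12Q, e1, e2, e3, h12_tr_diag, h12_tr_diag, h12_tr_diag]
  simp only [Matrix.conjTranspose_apply, star_star]
  rw [Finset.sum_comm (f := fun i j => x i j * star (x i j) * (q i : ℂ))]
  simp only [Complex.re_sum, Finset.mul_sum, ← Finset.sum_sub_distrib]
  refine Finset.sum_congr rfl fun i _ => Finset.sum_congr rfl fun j _ => ?_
  simp only [Complex.re_mul_ofReal, Complex.normSq_apply]
  simp
  ring

lemma h12_Q_le (A B : Matrix m m ℂ) (hA : Aᴴ * A = 1) (hB : Bᴴ * B = 1)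
    (p q : m → ℝ) (hp : ∀ i, 0 ≤ p i) (hq : ∀ i, 0 ≤ q i) (t : ℝ) (ht : 0 < t)
    (X : Matrix m m ℂ) :
    h12Q (h12D A p) (h12D B q) t X ≤
      ∑ i, ∑ j, Complex.normSq ((Bᴴ * A) j i) * (p i ^ 2 / (q j + t * p i)) := by
  have hA' : A * Aᴴ = 1 := mul_eq_one_comm.1 hA
  have hB' : B * Bᴴ = 1 := mul_eq_one_comm.1 hB
  have hX : X = B * (Bᴴ * X * A) * Aᴴ := by
    calc X = (B * Bᴴ) * X * (A * Aᴴ) := by rw [hA', hB', Matrix.one_mul, Matrix.mul_one]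
      _ = _ := by simp only [Matrix.mul_assoc]
  rw [hX, h12_Q_eq A B hA hB]
  refine Finset.sum_le_sum fun i _ => Finset.sum_le_sum fun j _ => ?_
  generalize (Bᴴ * X * A) j i = x
  generalize (Bᴴ * A) j i = u
  rcases (hp i).eq_or_lt with h | h
  · rw [← h]
    have := mul_nonneg (hq j) (Complex.normSq_nonneg x)
    simp
    linarith
  · have hpos : 0 < q j + t * p i := by have := hq j; positivity
    rw [← sub_nonneg]
    have : Complex.normSq u * (p i ^ 2 / (q j + t * p i)) -
        (2 * (star x * u).re * p i - (q j + t * p i) * Complex.normSq x) =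
        ((p i * u.re - (q j + t * p i) * x.re) ^ 2 + (p i * u.im - (q j + t * p i) * x.im) ^ 2) /
          (q j + t * p i) := by
      have hne := hpos.ne'
      simp only [Complex.normSq_apply, Complex.mul_re, Complex.star_def, Complex.conj_re,
        Complex.conj_im]
      generalize q j + t * p i = c at hne ⊢
      field_simp
      ring
    rw [this]
    positivity

lemma h12_Q_attained (A B : Matrix m m ℂ) (hA : Aᴴ * A = 1) (hB : Bᴴ * B = 1)
    (p q : m → ℝ) (hp : ∀ i, 0 ≤ p i) (hq : ∀ i, 0 ≤ q i) (t : ℝ) (ht : 0 < t) :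
    ∃ X, h12Q (h12D A p) (h12D B q) t X =
      ∑ i, ∑ j, Complex.normSq ((Bᴴ * A) j i) * (p i ^ 2 / (q j + t * p i)) := by
  refine ⟨B * (Matrix.of fun j i => ((p i / (q j + t * p i) : ℝ) : ℂ) * (Bᴴ * A) j i) * Aᴴ, ?_⟩
  rw [h12_Q_eq A B hA hB]
  refine Finset.sum_congr rfl fun i _ => Finset.sum_congr rfl fun j _ => ?_
  rw [Matrix.of_apply]
  generalize (Bᴴ * A) j i = u
  rcases (hp i).eq_or_lt with h | h
  · rw [← h]; simp
  · have hpos : 0 < q j + t * p i := by have := hq j; positivity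
    rw [map_mul, Complex.normSq_ofReal, star_mul', mul_assoc]
    have e : (star ((p i / (q j + t * p i) : ℝ) : ℂ)) = ((p i / (q j + t * p i) : ℝ) : ℂ) :=
      Complex.conj_ofReal _
    rw [e, mul_assoc, Complex.re_ofReal_mul]
    have e2 : (star u * u).re = Complex.normSq u := by simp [Complex.normSq_apply]
    rw [e2]
    have hne := hpos.ne'
    generalize q j + t * p i = c at hne ⊢
    field_simp
    ring

/-- Kraus-form channel. -/
noncomputable def h12Phi (K : ι → Matrix k m ℂ) (ρ : Matrix m m ℂ) : Matrix k k ℂ :=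
  ∑ a, K a * ρ * (K a)ᴴ

noncomputable def h12Dual (K : ι → Matrix k m ℂ) (X : Matrix k k ℂ) : Matrix m m ℂ :=
  ∑ a, (K a)ᴴ * X * K a

lemma h12_dual_tr (K : ι → Matrix k m ℂ) (X : Matrix k k ℂ) (ρ : Matrix m m ℂ) :
    (X * h12Phi K ρ).trace = (h12Dual K X * ρ).trace := by
  simp only [h12Phi, h12Dual, Matrix.mul_sum, Matrix.sum_mul, Matrix.trace_sum]
  refine Finset.sum_congr rfl fun a _ => ?_
  rw [← Matrix.mul_assoc, Matrix.trace_mul_comm]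
  simp only [Matrix.mul_assoc]

lemma h12_dual_star (K : ι → Matrix k m ℂ) (X : Matrix k k ℂ) :
    h12Dual K Xᴴ = (h12Dual K X)ᴴ := by
  simp [h12Dual, Matrix.conjTranspose_sum, Matrix.conjTranspose_mul, Matrix.mul_assoc]

lemma h12_schwarz (K : ι → Matrix k m ℂ) (hK : ∑ a, (K a)ᴴ * K a = 1) (X : Matrix k k ℂ)
    (ρ : Matrix m m ℂ) (hρ : ρ.PosSemidef) :
    ((h12Dual K X)ᴴ * h12Dual K X * ρ).trace.re ≤ (h12Dual K (Xᴴ * X) * ρ).trace.re := by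
  set Y := h12Dual K X with hY
  have key : h12Dual K (Xᴴ * X) - Yᴴ * Y =
      ∑ a, (X * K a - K a * Y)ᴴ * (X * K a - K a * Y) := by
    have e : ∀ a, (X * K a - K a * Y)ᴴ * (X * K a - K a * Y) =
        (K a)ᴴ * (Xᴴ * X) * K a - ((K a)ᴴ * Xᴴ * K a) * Y - Yᴴ * ((K a)ᴴ * X * K a)
          + Yᴴ * ((K a)ᴴ * K a) * Y := by
      intro a
      simp only [Matrix.conjTranspose_sub, Matrix.conjTranspose_mul, Matrix.sub_mul,
        Matrix.mul_sub, Matrix.mul_assoc]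
      abel
    simp only [e, Finset.sum_add_distrib, Finset.sum_sub_distrib, ← Matrix.sum_mul,
      ← Matrix.mul_sum, hK]
    have e1 : ∑ a, (K a)ᴴ * Xᴴ * K a = Yᴴ := h12_dual_star K X
    have e2 : ∑ a, (K a)ᴴ * X * K a = Y := rfl
    rw [e1, e2, Matrix.mul_one]
    simp only [h12Dual]
    abel
  have h2 : 0 ≤ ((h12Dual K (Xᴴ * X) - Yᴴ * Y) * ρ).trace := by
    rw [key, Matrix.sum_mul, Matrix.trace_sum]
    refine Finset.sum_nonneg fun a _ => ?_
    rw [Matrix.mul_assoc, Matrix.trace_mul_comm]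
    exact (hρ.mul_mul_conjTranspose_same _).trace_nonneg
  rw [Matrix.sub_mul, Matrix.trace_sub] at h2
  have h3 := (Complex.le_def.1 h2).1
  simp at h3
  linarith

lemma h12_Q_mono (K : ι → Matrix k m ℂ) (hK : ∑ a, (K a)ᴴ * K a = 1) (X : Matrix k k ℂ)
    (ρ σ : Matrix m m ℂ) (hρ : ρ.PosSemidef) (hσ : σ.PosSemidef) (t : ℝ) (ht : 0 < t) :
    h12Q (h12Phi K ρ) (h12Phi K σ) t X ≤ h12Q ρ σ t (h12Dual K X) := by
  simp only [h12Q, h12_dual_tr]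
  have h1 := h12_schwarz K hK X ρ hρ
  have h2 := h12_schwarz K hK Xᴴ σ hσ
  rw [h12_dual_star, Matrix.conjTranspose_conjTranspose,
    Matrix.conjTranspose_conjTranspose] at h2
  rw [h12_dual_star]
  have := mul_le_mul_of_nonneg_left h1 ht.le
  linarith

lemma h12_Phi_supp (K : ι → Matrix k m ℂ) (ρ σ : Matrix m m ℂ) (hσ : σ.PosSemidef)
    (h : ∀ v, σ.mulVec v = 0 → ρ.mulVec v = 0) (v : k → ℂ)
    (hv : (h12Phi K σ).mulVec v = 0) : (h12Phi K ρ).mulVec v = 0 := by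
  have e : ∀ a, star v ⬝ᵥ ((K a * σ * (K a)ᴴ) *ᵥ v) =
      star ((K a)ᴴ *ᵥ v) ⬝ᵥ (σ *ᵥ ((K a)ᴴ *ᵥ v)) := by
    intro a
    rw [Matrix.star_mulVec, Matrix.conjTranspose_conjTranspose, ← Matrix.dotProduct_mulVec]
    simp only [Matrix.mulVec_mulVec, Matrix.mul_assoc]
  have h0 : ∑ a, star ((K a)ᴴ *ᵥ v) ⬝ᵥ (σ *ᵥ ((K a)ᴴ *ᵥ v)) = 0 := by
    have : star v ⬝ᵥ ((h12Phi K σ) *ᵥ v) = 0 := by rw [hv]; simp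
    rw [h12Phi, Matrix.sum_mulVec, dotProduct_sum] at this
    simpa only [e] using this
  rw [Finset.sum_eq_zero_iff_of_nonneg (fun a _ => hσ.dotProduct_mulVec_nonneg _)] at h0
  rw [h12Phi, Matrix.sum_mulVec]
  refine Finset.sum_eq_zero fun a ha => ?_
  have h1 := h _ ((hσ.dotProduct_mulVec_zero_iff _).1 (h0 a ha))
  rw [← Matrix.mulVec_mulVec, ← Matrix.mulVec_mulVec, h1, Matrix.mulVec_zero]

lemma h12_supp_w (A B : Matrix m m ℂ) (hA : Aᴴ * A = 1) (hB : Bᴴ * B = 1)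
    (p q : m → ℝ) (h : ∀ v, (h12D B q).mulVec v = 0 → (h12D A p).mulVec v = 0) (i j : m)
    (hq : q j = 0) : p i = 0 ∨ Complex.normSq ((Bᴴ * A) j i) = 0 := by
  have h1 : (h12D B q) *ᵥ (B *ᵥ (Pi.single j 1)) = 0 := by
    rw [h12D, Matrix.mulVec_mulVec, Matrix.mul_assoc, hB, Matrix.mul_one,
      ← Matrix.mulVec_mulVec]
    have : (Matrix.diagonal fun i => (q i : ℂ)) *ᵥ (Pi.single j 1) = 0 := by
      ext l
      by_cases hl : l = j
      · subst hl; simp [Matrix.mulVec_diagonal, hq]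
      · simp [Matrix.mulVec_diagonal, hl]
    rw [this, Matrix.mulVec_zero]
  have h2 := congrArg (fun v => (Aᴴ *ᵥ v) i) (h _ h1)
  have e : Aᴴ *ᵥ (h12D A p *ᵥ (B *ᵥ (Pi.single j 1))) =
      (Matrix.diagonal fun i => (p i : ℂ)) *ᵥ ((Aᴴ * B) *ᵥ (Pi.single j 1)) := by
    simp only [h12D, Matrix.mulVec_mulVec]
    congr 1
    calc _ = (Aᴴ * A) * (Matrix.diagonal fun i => (p i : ℂ)) * (Aᴴ * B) := by
            simp only [Matrix.mul_assoc]
      _ = _ := by rw [hA, Matrix.one_mul]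
  simp only [e, Matrix.mulVec_diagonal, Matrix.mulVec_zero, Pi.zero_apply] at h2
  have e3 : (Aᴴ * B) i j = star ((Bᴴ * A) j i) := by
    rw [← Matrix.conjTranspose_apply, Matrix.conjTranspose_mul, Matrix.conjTranspose_conjTranspose]
  rw [Matrix.mulVec_single_one] at h2
  simp only [Matrix.col_apply, e3] at h2
  rcases mul_eq_zero.1 h2 with h3 | h3
  · left; exact_mod_cast h3
  · right; simpa using h3

lemma h12_tr_log (A B : Matrix m m ℂ) (p l : m → ℝ) :
    (h12D A p * h12D B l).trace.re =
      ∑ i, ∑ j, Complex.normSq ((Bᴴ * A) j i) * p i * l j := by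
  have e : (h12D A p * h12D B l).trace =
      ((Bᴴ * A)ᴴ * (Matrix.diagonal (fun i => (l i : ℂ)) * (Bᴴ * A)) *
        Matrix.diagonal (fun i => (p i : ℂ))).trace := by
    rw [Matrix.trace_mul_comm, h12D, h12D, ← Matrix.mul_assoc, Matrix.trace_mul_comm]
    congr 1
    simp only [Matrix.conjTranspose_mul, Matrix.conjTranspose_conjTranspose, Matrix.mul_assoc]
  rw [e, h12_tr_diag]
  simp only [Complex.re_sum]
  refine Finset.sum_congr rfl fun i _ => Finset.sum_congr rfl fun j _ => ?_
  rw [Matrix.diagonal_mul, Complex.re_mul_ofReal]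
  generalize (Bᴴ * A) j i = u
  simp [Complex.normSq_apply]
  ring

lemma h12_w_sum (A B : Matrix m m ℂ) (hA : Aᴴ * A = 1) (hB : Bᴴ * B = 1) (i : m) :
    ∑ j, Complex.normSq ((Bᴴ * A) j i) = 1 := by
  have hB' : B * Bᴴ = 1 := mul_eq_one_comm.1 hB
  have e : ((Bᴴ * A)ᴴ * (Bᴴ * A)) = 1 := by
    calc _ = Aᴴ * (B * Bᴴ) * A := by
            simp only [Matrix.conjTranspose_mul, Matrix.conjTranspose_conjTranspose,
              Matrix.mul_assoc]
      _ = 1 := by rw [hB', Matrix.mul_one, hA]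
  have h := congrFun (congrFun e i) i
  rw [Matrix.mul_apply, Matrix.one_apply_eq] at h
  have h2 := congrArg Complex.re h
  simp only [Complex.re_sum, Complex.one_re] at h2
  rw [← h2]
  refine Finset.sum_congr rfl fun j _ => ?_
  rw [Matrix.conjTranspose_apply]
  generalize (Bᴴ * A) j i = u
  simp [Complex.normSq_apply]

lemma h12_tr (A : Matrix m m ℂ) (hA : Aᴴ * A = 1) (p : m → ℝ) :
    (h12D A p).trace.re = ∑ i, p i := by
  rw [h12D, Matrix.trace_mul_comm, ← Matrix.mul_assoc, hA, Matrix.one_mul]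
  simp [Matrix.trace]

lemma h12_main (A B : Matrix m m ℂ) (hA : Aᴴ * A = 1) (hB : Bᴴ * B = 1) (p q : m → ℝ)
    (A' B' : Matrix k k ℂ) (hA' : A'ᴴ * A' = 1) (hB' : B'ᴴ * B' = 1) (p' q' : k → ℝ)
    (hp : ∀ i, 0 ≤ p i) (hq : ∀ i, 0 ≤ q i) (hp' : ∀ i, 0 ≤ p' i) (hq' : ∀ i, 0 ≤ q' i)
    (K : ι → Matrix k m ℂ) (hK : ∑ a, (K a)ᴴ * K a = 1)
    (hρ : (h12D A p).PosSemidef) (hσ : (h12D B q).PosSemidef)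
    (hρt : (h12D A p).trace = 1)
    (eρ : h12Phi K (h12D A p) = h12D A' p') (eσ : h12Phi K (h12D B q) = h12D B' q')
    (h : ∀ v, (h12D B q).mulVec v = 0 → (h12D A p).mulVec v = 0) :
    (h12D A' p' * (h12D A' (fun i => Real.log (p' i)) -
      h12D B' (fun i => Real.log (q' i)))).trace.re ≤
    (h12D A p * (h12D A (fun i => Real.log (p i)) -
      h12D B (fun i => Real.log (q i)))).trace.re := by
  have h' := h12_Phi_supp K _ _ hσ h
  rw [eρ, eσ] at h'
  have ht' : (h12D A' p').trace = 1 := by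
    rw [← eρ, ← Matrix.one_mul (h12Phi K _), h12_dual_tr]
    simp only [h12Dual, Matrix.mul_one, hK, Matrix.one_mul, hρt]
  have hsum : ∑ i, p i = 1 := by rw [← h12_tr A hA, hρt, Complex.one_re]
  have hsum' : ∑ i, p' i = 1 := by rw [← h12_tr A' hA', ht', Complex.one_re]
  have key := h12_real (fun i j => Complex.normSq ((Bᴴ * A) j i)) p q
    (fun i j => Complex.normSq ((B'ᴴ * A') j i)) p' q' hp hq hp' hq'
    (by simp only [← Finset.sum_mul, h12_w_sum A B hA hB, one_mul, hsum])
    (by simp only [← Finset.sum_mul, h12_w_sum A' B' hA' hB', one_mul, hsum'])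
    (h12_supp_w A B hA hB p q h) (h12_supp_w A' B' hA' hB' p' q' h')
    (by
      intro t ht
      obtain ⟨X, hX⟩ := h12_Q_attained A' B' hA' hB' p' q' hp' hq' t ht
      rw [← hX, ← eρ, ← eσ]
      exact (h12_Q_mono K hK X _ _ hρ hσ t ht).trans (h12_Q_le A B hA hB p q hp hq t ht _))
  have s1 : ∀ {l : Type _} [Fintype l] [DecidableEq l] (A B : Matrix l l ℂ)
      (hA : Aᴴ * A = 1) (hB : Bᴴ * B = 1) (p : l → ℝ),
      (h12D A p * h12D A (fun i => Real.log (p i))).trace.re =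
      ∑ i, ∑ j, Complex.normSq ((Bᴴ * A) j i) * p i * Real.log (p i) := by
    intro l _ _ A B hA hB p
    rw [h12_tr_log, hA]
    refine Finset.sum_congr rfl fun i _ => ?_
    rw [← Finset.sum_mul, ← Finset.sum_mul, h12_w_sum A B hA hB,
      Finset.sum_eq_single i]
    · simp
    · intro j _ hj; simp [Matrix.one_apply_ne hj]
    · simp
  have s2 : ∀ {l : Type _} [Fintype l] [DecidableEq l] (A B : Matrix l l ℂ)
      (hA : Aᴴ * A = 1) (hB : Bᴴ * B = 1) (p : l → ℝ),
      (h12D A p * h12D A (fun i => Real.log (p i))).trace.re =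
      ∑ i, ∑ j, Complex.normSq ((Bᴴ * A) j i) * p i * Real.log (p i) := by
    intro l _ _ A B hA hB p
    rw [h12_tr_log, hA]
    refine Finset.sum_congr rfl fun i _ => ?_
    rw [← Finset.sum_mul, ← Finset.sum_mul, h12_w_sum A B hA hB,
      Finset.sum_eq_single i]
    · simp
    · intro j _ hj; simp [Matrix.one_apply_ne hj]
    · simp
  simp only [Matrix.mul_sub, Matrix.trace_sub, Complex.sub_re]
  rw [s1 A' B' hA' hB', s2 A B hA hB, h12_tr_log A' B', h12_tr_log A B]
  exact key

lemma h12_Phi_psd (K : ι → Matrix k m ℂ) (ρ : Matrix m m ℂ) (hρ : ρ.PosSemidef) :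
    (h12Phi K ρ).PosSemidef :=
  Matrix.posSemidef_sum _ fun a _ => hρ.mul_mul_conjTranspose_same _

end Helpers

lemma h12_spec {d n : ℕ} [Fact (Nat.Prime d)] (ρ : Mat d n) (h : ρ.PosSemidef) :
    ∃ (A : Mat d n) (p : QV d n → ℝ), Aᴴ * A = 1 ∧ (∀ i, 0 ≤ p i) ∧ ρ = h12D A p ∧
      matLog ρ = h12D A (fun i => Real.log (p i)) := by
  refine ⟨h.1.eigenvectorUnitary, h.1.eigenvalues, ?_, h.eigenvalues_nonneg, ?_, ?_⟩
  · exact Unitary.coe_star_mul_self _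
  · exact h.1.spectral_theorem
  · rw [matLog, dif_pos h.1]; rfl

lemma h12_sqrt {d n : ℕ} [Fact (Nat.Prime d)] (τ : Mat d n) (h : τ.PosSemidef) :
    ∃ C : Mat d n, τ = Cᴴ * C := by
  obtain ⟨A, p, -, hp, e, -⟩ := h12_spec τ h
  refine ⟨Matrix.diagonal (fun i => ((Real.sqrt (p i) : ℝ) : ℂ)) * Aᴴ, ?_⟩
  have e2 : (Matrix.diagonal (fun i => ((Real.sqrt (p i) : ℝ) : ℂ)))ᴴ *
      Matrix.diagonal (fun i => ((Real.sqrt (p i) : ℝ) : ℂ)) =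
      (Matrix.diagonal (fun i => (p i : ℂ)) : Mat d n) := by
    rw [Matrix.diagonal_conjTranspose, Matrix.diagonal_mul_diagonal]
    congr 1
    funext i
    rw [Pi.star_apply, Complex.star_def, Complex.conj_ofReal, ← Complex.ofReal_mul,
      Real.mul_self_sqrt (hp i)]
  rw [e, h12D, ← e2]
  simp only [Matrix.conjTranspose_mul, Matrix.conjTranspose_conjTranspose, Matrix.mul_assoc]

/-- DPI for Kraus maps. -/
lemma h12_dpi {d n : ℕ} [Fact (Nat.Prime d)] {ι : Type*} [Fintype ι]
    (K : ι → Mat d n) (hK : ∑ a, (K a)ᴴ * K a = 1) (ρ σ : Mat d n)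
    (hρ : IsState d n ρ) (hσ : IsState d n σ) :
    relEnt (h12Phi K ρ) (h12Phi K σ) ≤ relEnt ρ σ := by
  by_cases h : suppLE ρ σ
  · have h' : suppLE (h12Phi K ρ) (h12Phi K σ) := h12_Phi_supp K ρ σ hσ.1 h
    rw [relEnt, relEnt, if_pos h, if_pos h', EReal.coe_le_coe_iff]
    obtain ⟨A, p, hA, hp, e1, l1⟩ := h12_spec ρ hρ.1
    obtain ⟨B, q, hB, hq, e2, l2⟩ := h12_spec σ hσ.1
    obtain ⟨A', p', hA', hp', e3, l3⟩ := h12_spec _ (h12_Phi_psd K ρ hρ.1)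
    obtain ⟨B', q', hB', hq', e4, l4⟩ := h12_spec _ (h12_Phi_psd K σ hσ.1)
    rw [l1, l2, l3, l4, e3]
    have := h12_main A B hA hB p q A' B' hA' hB' p' q' hp hq hp' hq' K hK
      (e1 ▸ hρ.1) (e2 ▸ hσ.1) (e1 ▸ hρ.2) (by rw [← e1, e3]) (by rw [← e2, e4])
      (by rw [← e1, ← e2]; exact h)
    rw [← e1] at this
    exact this
  · rw [show relEnt ρ σ = ⊤ from if_neg h]
    exact le_top

lemma h12_convU_unitary (d n : ℕ) [Fact (Nat.Prime d)] (g00 g01 g10 g11 : ZMod d)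
    (hdet : g00 * g11 - g01 * g10 ≠ 0) :
    (convU d n g00 g01 g10 g11)ᴴ * convU d n g00 g01 g10 g11 = 1 := by
  ext x y
  rw [Matrix.mul_apply]
  simp only [convU, Matrix.conjTranspose_apply, Matrix.of_apply]
  set N := (g00 * g11 - g01 * g10)⁻¹ with hN
  have hNd : N * (g00 * g11 - g01 * g10) = 1 := inv_mul_cancel₀ hdet
  rw [Finset.sum_eq_single ((fun a => N * g11 * y.1 a - N * g10 * y.2 a : QV d n),
             (fun a => -(N * g01) * y.1 a + N * g00 * y.2 a : QV d n))]
  · by_cases hxy : x = y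
    · subst hxy; simp
    · rw [Matrix.one_apply_ne hxy, if_neg, star_zero, zero_mul]
      intro heq
      apply hxy
      have h1 := congrArg Prod.fst heq
      have h2 := congrArg Prod.snd heq
      refine Prod.ext (funext fun a => ?_) (funext fun a => ?_)
      · have h1 := congrFun h1 a
        have h2 := congrFun h2 a
        simp only at h1 h2
        linear_combination (-g00) * h1 - g10 * h2 - (x.1 a - y.1 a) * hNd
      · have h1 := congrFun h1 a
        have h2 := congrFun h2 a
        simp only at h1 h2
        linear_combination (-g01) * h1 - g11 * h2 - (x.2 a - y.2 a) * hNd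
  · intro b _ hb
    rw [if_neg hb, mul_zero]
  · simp

/-- Slice of a bipartite operator at fixed output environment index. -/
def h12V {d n : ℕ} (U : Matrix (QV d n × QV d n) (QV d n × QV d n) ℂ) (j : QV d n) :
    Matrix (QV d n) (QV d n × QV d n) ℂ :=
  Matrix.of fun i ab => U (i, j) ab

/-- Isometric-type embedding preparing the ancilla vector given by row `c` of `C`. -/
noncomputable def h12E {d n : ℕ} (C : Mat d n) (c : QV d n) :
    Matrix (QV d n × QV d n) (QV d n) ℂ :=
  Matrix.of fun ab a' => if ab.1 = a' then star (C c ab.2) else 0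

/-- Kraus operators of `ρ ↦ Tr_B[U (ρ ⊗ CᴴC) Uᴴ]`. -/
noncomputable def h12K {d n : ℕ} [Fact (Nat.Prime d)]
    (U : Matrix (QV d n × QV d n) (QV d n × QV d n) ℂ)
    (C : Mat d n) (jc : QV d n × QV d n) : Mat d n :=
  h12V U jc.1 * h12E C jc.2

lemma h12_kron {d n : ℕ} [Fact (Nat.Prime d)] (C ρ : Mat d n) :
    kron ρ (Cᴴ * C) = ∑ c, h12E C c * ρ * (h12E C c)ᴴ := by
  ext x y
  simp only [kron, h12E, Matrix.of_apply, Matrix.sum_apply, Matrix.mul_apply,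
    Matrix.conjTranspose_apply, ite_mul, zero_mul, apply_ite star, star_star, star_zero,
    mul_ite, mul_zero, Finset.sum_ite_eq, Finset.mem_univ, if_true, Finset.mul_sum]
  refine Finset.sum_congr rfl fun c _ => ?_
  ring

lemma h12_ptr {d n : ℕ} [Fact (Nat.Prime d)]
    (U M : Matrix (QV d n × QV d n) (QV d n × QV d n) ℂ) :
    ptrB (U * M * Uᴴ) = ∑ j, h12V U j * M * (h12V U j)ᴴ := by
  ext x y
  simp only [ptrB, h12V, Matrix.of_apply, Matrix.sum_apply, Matrix.mul_apply,
    Matrix.conjTranspose_apply]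

lemma h12_kraus {d n : ℕ} [Fact (Nat.Prime d)]
    (U : Matrix (QV d n × QV d n) (QV d n × QV d n) ℂ)
    (C ρ : Mat d n) :
    ptrB (U * kron ρ (Cᴴ * C) * Uᴴ) = h12Phi (h12K U C) ρ := by
  rw [h12_ptr, h12_kron, h12Phi, Fintype.sum_prod_type]
  refine Finset.sum_congr rfl fun j _ => ?_
  rw [Matrix.mul_sum, Matrix.sum_mul]
  refine Finset.sum_congr rfl fun c _ => ?_
  simp only [h12K, Matrix.conjTranspose_mul, Matrix.mul_assoc]

lemma h12_kraus_tp {d n : ℕ} [Fact (Nat.Prime d)]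
    (U : Matrix (QV d n × QV d n) (QV d n × QV d n) ℂ) (hU : Uᴴ * U = 1)
    (C : Mat d n) (hC : (Cᴴ * C).trace = 1) :
    ∑ a, (h12K U C a)ᴴ * h12K U C a = 1 := by
  have hV : ∑ j, (h12V U j)ᴴ * h12V U j = 1 := by
    rw [← hU]
    ext x y
    simp only [h12V, Matrix.of_apply, Matrix.sum_apply, Matrix.mul_apply,
      Matrix.conjTranspose_apply, Fintype.sum_prod_type]
    exact Finset.sum_comm
  have hE : ∑ c, (h12E C c)ᴴ * h12E C c = 1 := by
    ext x y
    have hC' : ∑ c, ∑ b, C c b * star (C c b) = 1 := by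
      rw [Finset.sum_comm, ← hC]
      simp only [Matrix.trace, Matrix.diag_apply, Matrix.mul_apply, Matrix.conjTranspose_apply]
      exact Finset.sum_congr rfl fun b _ => Finset.sum_congr rfl fun c _ => mul_comm _ _
    simp only [Matrix.sum_apply, Matrix.mul_apply, Matrix.conjTranspose_apply, h12E,
      Matrix.of_apply, Fintype.sum_prod_type]
    by_cases hxy : x = y
    · subst hxy
      rw [Matrix.one_apply_eq, ← hC']
      refine Finset.sum_congr rfl fun c _ => ?_
      rw [Finset.sum_eq_single x]
      · simp
      · intro b _ hb; simp [hb]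
      · simp
    · rw [Matrix.one_apply_ne hxy]
      refine Finset.sum_eq_zero fun c _ => Finset.sum_eq_zero fun a _ =>
        Finset.sum_eq_zero fun b _ => ?_
      by_cases h : a = x
      · subst h; simp [hxy]
      · simp [h]
  rw [Fintype.sum_prod_type, Finset.sum_comm, ← hE]
  refine Finset.sum_congr rfl fun c _ => ?_
  calc _ = (h12E C c)ᴴ * (∑ j, (h12V U j)ᴴ * h12V U j) * h12E C c := by
        rw [Matrix.mul_sum, Matrix.sum_mul]
        refine Finset.sum_congr rfl fun j _ => ?_
        simp only [h12K, Matrix.conjTranspose_mul, Matrix.mul_assoc]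
    _ = _ := by rw [hV, Matrix.mul_one]

/-- Monotonicity of the relative entropy under convolution:
`D(ρ ⊠ τ ‖ σ ⊠ τ) ≤ D(ρ ‖ σ)`. -/
theorem statement12 (d n : ℕ) [Fact (Nat.Prime d)] (hd : Odd d) (hn : 1 ≤ n)
    (g00 g01 g10 g11 : ZMod d) (h00 : g00 ≠ 0) (h01 : g01 ≠ 0)
    (h10 : g10 ≠ 0) (h11 : g11 ≠ 0) (hdet : g00 * g11 - g01 * g10 ≠ 0)
    (ρ σ τ : Mat d n) (hρ : IsState d n ρ) (hσ : IsState d n σ) (hτ : IsState d n τ) :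
    relEnt (conv d n g00 g01 g10 g11 ρ τ) (conv d n g00 g01 g10 g11 σ τ) ≤
      relEnt ρ σ := by
  obtain ⟨C, hC⟩ := h12_sqrt τ hτ.1
  have hK := h12_kraus_tp _ (h12_convU_unitary d n g00 g01 g10 g11 hdet) C (hC ▸ hτ.2)
  have := h12_dpi _ hK ρ σ hρ hσ
  rw [← h12_kraus, ← h12_kraus, ← hC] at this
  exact this

end PaperQI
end

section
/- Convolution increases Rényi entropy: for all n-qudit states ρ, σ and every α ∈ [0, +∞], H_α(ρ ⊠ σ) ≥ max{H_α(ρ), H_α(σ)}. -/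
open scoped BigOperators ComplexOrder Classical ENNReal
open Matrix

namespace PaperQI

/-! ### Doubly stochastic matrices and entropies of vectors -/

theorem ds_convex {ι : Type*} [Fintype ι] (D : ι → ι → ℝ) (l m : ι → ℝ)
    (hD : ∀ c a, 0 ≤ D c a) (hr : ∀ c, ∑ a, D c a = 1) (hc : ∀ a, ∑ c, D c a = 1)
    (hl : ∀ a, 0 ≤ l a) (hm : ∀ c, m c = ∑ a, D c a * l a)
    (f : ℝ → ℝ) (hf : ConvexOn ℝ (Set.Ici 0) f) : ∑ c, f (m c) ≤ ∑ a, f (l a) := by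
  have h1 : ∀ c, f (m c) ≤ ∑ a, D c a * f (l a) := fun c => by
    have := hf.map_sum_le (t := Finset.univ) (w := D c) (p := l)
      (fun a _ => hD c a) (hr c) (fun a _ => hl a)
    simpa [hm c] using this
  calc ∑ c, f (m c) ≤ ∑ c, ∑ a, D c a * f (l a) := Finset.sum_le_sum fun c _ => h1 c
    _ = ∑ a, ∑ c, D c a * f (l a) := Finset.sum_comm
    _ = ∑ a, f (l a) := by simp [← Finset.sum_mul, hc]

theorem ds_card {ι : Type*} [Fintype ι] (D : ι → ι → ℝ) (l m : ι → ℝ)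
    (hD : ∀ c a, 0 ≤ D c a) (hr : ∀ c, ∑ a, D c a = 1) (hc : ∀ a, ∑ c, D c a = 1)
    (hl : ∀ a, 0 ≤ l a) (hm : ∀ c, m c = ∑ a, D c a * l a) :
    (Finset.univ.filter fun a => l a ≠ 0).card ≤ (Finset.univ.filter fun c => m c ≠ 0).card := by
  set S := Finset.univ.filter fun a => l a ≠ 0
  set T := Finset.univ.filter fun c => m c ≠ 0
  have hz : ∀ a ∈ S, ∀ c, c ∉ T → D c a = 0 := by
    intro a ha c hcT
    have h0 : m c = 0 := by simpa [T] using hcT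
    rw [hm c, Finset.sum_eq_zero_iff_of_nonneg (fun a _ => mul_nonneg (hD c a) (hl a))] at h0
    have := h0 a (Finset.mem_univ a)
    have hla : l a ≠ 0 := by simpa [S] using ha
    simpa [hla] using this
  have : (S.card : ℝ) ≤ T.card := by
    calc (S.card : ℝ) = ∑ a ∈ S, ∑ c, D c a := by simp [hc]
      _ = ∑ a ∈ S, ∑ c ∈ T, D c a := by
        refine Finset.sum_congr rfl fun a ha => ?_
        exact (Finset.sum_subset (Finset.subset_univ T) fun c _ h => hz a ha c h).symm
      _ = ∑ c ∈ T, ∑ a ∈ S, D c a := Finset.sum_comm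
      _ ≤ ∑ c ∈ T, ∑ a, D c a := Finset.sum_le_sum fun c _ =>
        Finset.sum_le_sum_of_subset_of_nonneg (Finset.subset_univ S) fun a _ _ => hD c a
      _ = T.card := by simp [hr]
  exact_mod_cast this

/-- A positive, unital, trace-preserving map acts on spectra through a doubly
stochastic matrix. -/
theorem exists_ds {ι : Type*} [Fintype ι] [DecidableEq ι]
    (Φ : Matrix ι ι ℂ →ₗ[ℂ] Matrix ι ι ℂ)
    (hpos : ∀ A : Matrix ι ι ℂ, A.PosSemidef → (Φ A).PosSemidef)
    (hone : Φ 1 = 1) (htr : ∀ A, (Φ A).trace = A.trace)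
    (ρ : Matrix ι ι ℂ) (hρ : ρ.IsHermitian) (hτ : (Φ ρ).IsHermitian) :
    ∃ D : ι → ι → ℝ, (∀ c a, 0 ≤ D c a) ∧ (∀ c, ∑ a, D c a = 1) ∧ (∀ a, ∑ c, D c a = 1) ∧
      ∀ c, hτ.eigenvalues c = ∑ a, D c a * hρ.eigenvalues a := by
  set V : Matrix ι ι ℂ := hρ.eigenvectorUnitary.1
  set W : Matrix ι ι ℂ := hτ.eigenvectorUnitary.1
  have hVV : V * Vᴴ = 1 := Unitary.mul_star_self_of_mem hρ.eigenvectorUnitary.2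
  have hVV' : Vᴴ * V = 1 := Unitary.star_mul_self_of_mem hρ.eigenvectorUnitary.2
  have hWW : W * Wᴴ = 1 := Unitary.mul_star_self_of_mem hτ.eigenvectorUnitary.2
  have hWW' : Wᴴ * W = 1 := Unitary.star_mul_self_of_mem hτ.eigenvectorUnitary.2
  have hs : ρ = V * diagonal (fun i => (hρ.eigenvalues i : ℂ)) * Vᴴ := hρ.spectral_theorem
  have ht : Φ ρ = W * diagonal (fun i => (hτ.eigenvalues i : ℂ)) * Wᴴ := hτ.spectral_theorem
  clear_value V W
  generalize hρ.eigenvalues = l at *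
  generalize hτ.eigenvalues = m at *
  let P : ι → Matrix ι ι ℂ := fun a => V * diagonal (Pi.single a (1 : ℂ)) * Vᴴ
  have hPpos : ∀ a, (P a).PosSemidef := fun a => by
    refine PosSemidef.mul_mul_conjTranspose_same ?_ V
    refine PosSemidef.diagonal ?_
    intro i
    by_cases h : i = a
    · subst h; simp
    · simp [h]
  have hPtr : ∀ a, (P a).trace = 1 := fun a => by
    simp only [P]
    rw [trace_mul_cycle, hVV', one_mul, trace_diagonal]
    simp
  have hPsum : ∀ f : ι → ℂ, ∑ a, f a • P a = V * diagonal f * Vᴴ := fun f => by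
    have : diagonal f = ∑ a, f a • diagonal (Pi.single a (1 : ℂ)) := by
      ext i j
      rw [Matrix.sum_apply]
      by_cases h : i = j
      · subst h; simp [Pi.single_apply]
      · simp [h]
    rw [this, Finset.mul_sum, Finset.sum_mul]
    simp [P]
  have hP1 : ∑ a, P a = 1 := by
    have := hPsum 1
    simpa [hVV] using this
  have hQ : ∀ a, (Wᴴ * Φ (P a) * W).PosSemidef := fun a =>
    (hpos _ (hPpos a)).conjTranspose_mul_mul_same W
  refine ⟨fun c a => ((Wᴴ * Φ (P a) * W) c c).re, fun c a => ?_, fun c => ?_, fun a => ?_,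
    fun c => ?_⟩
  · exact (Complex.nonneg_iff.mp ((hQ a).diag_nonneg (i := c))).1
  · have : ∑ a, Wᴴ * Φ (P a) * W = 1 := by
      rw [← Finset.sum_mul, ← Finset.mul_sum, ← map_sum, hP1, hone, mul_one, hWW']
    have h2 := congrFun (congrFun this c) c
    rw [Matrix.sum_apply] at h2
    rw [← Complex.re_sum, h2]; simp
  · have : (Wᴴ * Φ (P a) * W).trace = 1 := by
      rw [trace_mul_cycle, hWW, one_mul, htr, hPtr]
    rw [← Complex.re_sum]
    have h2 : ∑ c, (Wᴴ * Φ (P a) * W) c c = 1 := this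
    rw [h2]; simp
  · have h1 : Wᴴ * Φ ρ * W = diagonal (fun i => (m i : ℂ)) := by
      rw [ht]
      simp only [mul_assoc, hWW', mul_one]
      rw [← mul_assoc, hWW', one_mul]
    have h3 : Φ ρ = ∑ a, (l a : ℂ) • Φ (P a) := by
      conv_lhs => rw [hs, ← hPsum]
      simp
    have h2 := congrFun (congrFun h1 c) c
    rw [h3, Finset.mul_sum, Finset.sum_mul, Matrix.sum_apply] at h2
    simp only [mul_smul_comm, smul_mul_assoc, Matrix.smul_apply, diagonal_apply_eq] at h2
    have h4 := congrArg Complex.re h2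
    rw [Complex.re_sum] at h4
    simp only [smul_eq_mul, Complex.re_ofReal_mul, Complex.ofReal_re] at h4
    rw [← h4]
    exact Finset.sum_congr rfl fun a _ => mul_comm _ _

theorem state_eig {d n : ℕ} [Fact (Nat.Prime d)] {ρ : Mat d n} (hρ : IsState d n ρ) :
    ∑ i, hρ.1.isHermitian.eigenvalues i = 1 := by
  have h := hρ.1.isHermitian.trace_eq_sum_eigenvalues
  have := congrArg Complex.re (hρ.2.symm.trans h)
  simpa using this.symm

theorem exists_pos_of_sum_one {ι : Type*} [Fintype ι] (l : ι → ℝ)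
    (h1 : ∑ i, l i = 1) : ∃ i, 0 < l i := by
  by_contra h
  push Not at h
  have := Finset.sum_nonpos (s := Finset.univ) fun i _ => h i
  linarith

theorem renyi_mono {d n : ℕ} [Fact (Nat.Prime d)] (Φ : Mat d n →ₗ[ℂ] Mat d n)
    (hpos : ∀ A : Mat d n, A.PosSemidef → (Φ A).PosSemidef)
    (hone : Φ 1 = 1) (htr : ∀ A, (Φ A).trace = A.trace)
    (ρ : Mat d n) (hρ : IsState d n ρ) (α : ℝ≥0∞) :
    renyiEnt α ρ ≤ renyiEnt α (Φ ρ) := by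
  have hτ : IsState d n (Φ ρ) := ⟨hpos _ hρ.1, by rw [htr, hρ.2]⟩
  have hl1 := state_eig hρ
  have hm1 := state_eig hτ
  have hl0 : ∀ a, 0 ≤ hρ.1.isHermitian.eigenvalues a := hρ.1.eigenvalues_nonneg
  have hm0 : ∀ a, 0 ≤ hτ.1.isHermitian.eigenvalues a := hτ.1.eigenvalues_nonneg
  obtain ⟨D, hD, hr, hc, hm⟩ := exists_ds Φ hpos hone htr ρ hρ.1.isHermitian hτ.1.isHermitian
  unfold renyiEnt
  rw [dif_pos hρ.1.isHermitian, dif_pos hτ.1.isHermitian,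
    hρ.1.isHermitian.rank_eq_card_non_zero_eigs, hτ.1.isHermitian.rank_eq_card_non_zero_eigs,
    Fintype.card_subtype, Fintype.card_subtype]
  generalize hρ.1.isHermitian.eigenvalues = l at *
  generalize hτ.1.isHermitian.eigenvalues = m at *
  obtain ⟨a0, ha0⟩ := exists_pos_of_sum_one l hl1
  obtain ⟨c0, hc0⟩ := exists_pos_of_sum_one m hm1
  split_ifs with h0 h1 ht
  · apply Real.log_le_log
    · exact_mod_cast Finset.card_pos.mpr ⟨a0, by simp [ha0.ne']⟩
    · have := ds_card D l m hD hr hc hl0 hm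
      exact_mod_cast this
  · have := ds_convex D l m hD hr hc hl0 hm _ Real.convexOn_mul_log
    exact neg_le_neg this
  · apply neg_le_neg
    have hb : ∀ (f : QV d n → ℝ), BddAbove (Set.range f) := fun f => Set.Finite.bddAbove (Set.finite_range f)
    apply Real.log_le_log
    · exact hc0.trans_le (le_ciSup (hb m) c0)
    · refine ciSup_le fun c => ?_
      rw [hm c]
      calc ∑ a, D c a * l a ≤ ∑ a, D c a * (⨆ i, l i) :=
            Finset.sum_le_sum fun a _ => mul_le_mul_of_nonneg_left (le_ciSup (hb l) a) (hD c a)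
        _ = ⨆ i, l i := by rw [← Finset.sum_mul, hr, one_mul]
  · have hp : 0 < α.toReal := ENNReal.toReal_pos h0 ht
    have hne : α.toReal ≠ 1 := fun h => h1 (by
      rw [← ENNReal.ofReal_toReal ht, h, ENNReal.ofReal_one])
    generalize α.toReal = p at *
    have hpl : 0 < ∑ i, l i ^ p := Finset.sum_pos' (fun i _ => Real.rpow_nonneg (hl0 i) p)
      ⟨a0, Finset.mem_univ _, Real.rpow_pos_of_pos ha0 p⟩
    have hpm : 0 < ∑ i, m i ^ p := Finset.sum_pos' (fun i _ => Real.rpow_nonneg (hm0 i) p)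
      ⟨c0, Finset.mem_univ _, Real.rpow_pos_of_pos hc0 p⟩
    rcases lt_or_gt_of_ne hne with hlt | hgt
    · have := ds_convex D l m hD hr hc hl0 hm _ (Real.concaveOn_rpow hp.le hlt.le).neg
      simp only [Pi.neg_apply, Finset.sum_neg_distrib, neg_le_neg_iff] at this
      exact mul_le_mul_of_nonneg_left (Real.log_le_log hpl this)
        (inv_nonneg.mpr (by linarith))
    · have := ds_convex D l m hD hr hc hl0 hm _ (convexOn_rpow hgt.le)
      exact mul_le_mul_of_nonpos_left (Real.log_le_log hpm this)
        (inv_nonpos.mpr (by linarith))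

/-! ### The convolution -/

theorem convU_apply' (d n : ℕ) [Fact (Nat.Prime d)] (g00 g01 g10 g11 : ZMod d)
    (hdet : g00 * g11 - g01 * g10 ≠ 0) (k l i j : QV d n) :
    convU d n g00 g01 g10 g11 (k, l) (i, j) =
      if (i, j) = (g00 • k + g10 • l, g01 • k + g11 • l) then 1 else 0 := by
  unfold convU
  rw [Matrix.of_apply]
  congr 1
  simp only [Prod.mk.injEq, eq_iff_iff]
  constructor
  · rintro ⟨rfl, rfl⟩
    constructor <;> ext a <;> simp <;> field_simp <;> ring
  · rintro ⟨rfl, rfl⟩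
    constructor <;> ext a <;> simp <;> field_simp <;> ring

theorem conv_apply (d n : ℕ) [Fact (Nat.Prime d)] (g00 g01 g10 g11 : ZMod d)
    (hdet : g00 * g11 - g01 * g10 ≠ 0) (ρ σ : Mat d n) (k k' : QV d n) :
    conv d n g00 g01 g10 g11 ρ σ k k' =
      ∑ l : QV d n, ρ (g00 • k + g10 • l) (g00 • k' + g10 • l) *
        σ (g01 • k + g11 • l) (g01 • k' + g11 • l) := by
  unfold conv ptrB
  rw [Matrix.of_apply]
  refine Finset.sum_congr rfl fun l _ => ?_
  have hU : ∀ (x : QV d n × QV d n) (y : QV d n × QV d n),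
      convU d n g00 g01 g10 g11 x y =
      if y = (g00 • x.1 + g10 • x.2, g01 • x.1 + g11 • x.2) then 1 else 0 :=
    fun x y => convU_apply' d n g00 g01 g10 g11 hdet x.1 x.2 y.1 y.2
  simp only [Matrix.mul_apply, Matrix.conjTranspose_apply, hU]
  simp [kron]

theorem conv_posSemidef (d n : ℕ) [Fact (Nat.Prime d)] (g00 g01 g10 g11 : ZMod d)
    (ρ σ : Mat d n) (hρ : ρ.PosSemidef) (hσ : σ.PosSemidef) :
    (conv d n g00 g01 g10 g11 ρ σ).PosSemidef := by
  have hk : (kron ρ σ).PosSemidef := hρ.kronecker hσ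
  have hM := hk.mul_mul_conjTranspose_same (convU d n g00 g01 g10 g11)
  unfold conv
  generalize convU d n g00 g01 g10 g11 * kron ρ σ * (convU d n g00 g01 g10 g11)ᴴ = M at hM
  have : ptrB M = ∑ j : QV d n, M.submatrix (fun i => (i, j)) (fun i => (i, j)) := by
    ext i i'
    simp [ptrB, Matrix.sum_apply]
  rw [this]
  exact Matrix.posSemidef_sum _ fun j _ => hM.submatrix _

theorem sum_affine {d n : ℕ} [Fact (Nat.Prime d)] (g : ZMod d) (hg : g ≠ 0) (v : QV d n)
    (f : QV d n → ℂ) : ∑ l : QV d n, f (v + g • l) = ∑ x, f x := by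
  refine Function.Bijective.sum_comp (e := fun l : QV d n => v + g • l) ?_ f
  rw [← Finite.injective_iff_bijective]
  intro x y h
  exact smul_right_injective _ hg (add_left_cancel h)

theorem affine_inj {d n : ℕ} [Fact (Nat.Prime d)] (g : ZMod d) (hg : g ≠ 0) (w k k' : QV d n) :
    g • k + w = g • k' + w ↔ k = k' := by
  constructor
  · intro h
    exact smul_right_injective _ hg (add_right_cancel h)
  · rintro rfl; rfl

theorem conv_one_left (d n : ℕ) [Fact (Nat.Prime d)] (g00 g01 g10 g11 : ZMod d)
    (h00 : g00 ≠ 0) (h11 : g11 ≠ 0)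
    (hdet : g00 * g11 - g01 * g10 ≠ 0) (σ : Mat d n) (hσ : σ.trace = 1) :
    conv d n g00 g01 g10 g11 1 σ = 1 := by
  ext k k'
  rw [conv_apply _ _ _ _ _ _ hdet]
  simp only [Matrix.one_apply, affine_inj g00 h00]
  split_ifs with h
  · subst h
    simp only [one_mul]
    rw [sum_affine g11 h11 (g01 • k) (fun x => σ x x)]
    exact hσ
  · simp

theorem conv_one_right (d n : ℕ) [Fact (Nat.Prime d)] (g00 g01 g10 g11 : ZMod d)
    (h01 : g01 ≠ 0) (h10 : g10 ≠ 0)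
    (hdet : g00 * g11 - g01 * g10 ≠ 0) (ρ : Mat d n) (hρ : ρ.trace = 1) :
    conv d n g00 g01 g10 g11 ρ 1 = 1 := by
  ext k k'
  rw [conv_apply _ _ _ _ _ _ hdet]
  simp only [Matrix.one_apply, affine_inj g01 h01]
  split_ifs with h
  · subst h
    simp only [mul_one]
    rw [sum_affine g10 h10 (g00 • k) (fun x => ρ x x)]
    exact hρ
  · simp

theorem conv_trace (d n : ℕ) [Fact (Nat.Prime d)] (g00 g01 g10 g11 : ZMod d)
    (hdet : g00 * g11 - g01 * g10 ≠ 0) (ρ σ : Mat d n) :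
    (conv d n g00 g01 g10 g11 ρ σ).trace = ρ.trace * σ.trace := by
  have hb : Function.Bijective (fun x : QV d n × QV d n =>
      (g00 • x.1 + g10 • x.2, g01 • x.1 + g11 • x.2)) := by
    rw [← Finite.injective_iff_bijective]
    rintro ⟨a, b⟩ ⟨a', b'⟩ h
    simp only [Prod.mk.injEq] at h ⊢
    obtain ⟨h1, h2⟩ := h
    constructor
    · refine smul_right_injective _ hdet (?_ : _ • a = _ • a')
      calc (g00 * g11 - g01 * g10) • a
          = g11 • (g00 • a + g10 • b) - g10 • (g01 • a + g11 • b) := by module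
        _ = _ := by rw [h1, h2]; module
    · refine smul_right_injective _ hdet (?_ : _ • b = _ • b')
      calc (g00 * g11 - g01 * g10) • b
          = g00 • (g01 • a + g11 • b) - g01 • (g00 • a + g10 • b) := by module
        _ = _ := by rw [h1, h2]; module
  simp only [Matrix.trace, Matrix.diag_apply, conv_apply _ _ _ _ _ _ hdet]
  rw [Finset.sum_mul_sum, ← Fintype.sum_prod_type', ← Fintype.sum_prod_type']
  exact hb.sum_comp (fun y : QV d n × QV d n => ρ y.1 y.1 * σ y.2 y.2)

/-- Convolution with a fixed right factor, as a linear map. -/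
noncomputable def convLeft (d n : ℕ) [Fact (Nat.Prime d)] (g00 g01 g10 g11 : ZMod d)
    (hdet : g00 * g11 - g01 * g10 ≠ 0) (σ : Mat d n) : Mat d n →ₗ[ℂ] Mat d n where
  toFun ρ := conv d n g00 g01 g10 g11 ρ σ
  map_add' x y := by
    ext k k'
    simp [conv_apply _ _ _ _ _ _ hdet, add_mul, Finset.sum_add_distrib]
  map_smul' c x := by
    ext k k'
    simp [conv_apply _ _ _ _ _ _ hdet, mul_assoc, Finset.mul_sum]

/-- Convolution with a fixed left factor, as a linear map. -/
noncomputable def convRight (d n : ℕ) [Fact (Nat.Prime d)] (g00 g01 g10 g11 : ZMod d)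
    (hdet : g00 * g11 - g01 * g10 ≠ 0) (ρ : Mat d n) : Mat d n →ₗ[ℂ] Mat d n where
  toFun σ := conv d n g00 g01 g10 g11 ρ σ
  map_add' x y := by
    ext k k'
    simp [conv_apply _ _ _ _ _ _ hdet, mul_add, Finset.sum_add_distrib]
  map_smul' c x := by
    ext k k'
    simp [conv_apply _ _ _ _ _ _ hdet, mul_left_comm, Finset.mul_sum]

/-- Convolution increases the Rényi entropy: for all states `ρ, σ`
and every `α ∈ [0,∞]`, `H_α(ρ ⊠ σ) ≥ max{H_α(ρ), H_α(σ)}`. -/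
theorem statement13 (d n : ℕ) [Fact (Nat.Prime d)] (hd : Odd d) (hn : 1 ≤ n)
    (g00 g01 g10 g11 : ZMod d) (h00 : g00 ≠ 0) (h01 : g01 ≠ 0)
    (h10 : g10 ≠ 0) (h11 : g11 ≠ 0) (hdet : g00 * g11 - g01 * g10 ≠ 0)
    (ρ σ : Mat d n) (hρ : IsState d n ρ) (hσ : IsState d n σ) (α : ℝ≥0∞) :
    max (renyiEnt α ρ) (renyiEnt α σ) ≤ renyiEnt α (conv d n g00 g01 g10 g11 ρ σ) := by
  refine max_le ?_ ?_
  · exact renyi_mono (convLeft d n g00 g01 g10 g11 hdet σ)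
      (fun A hA => conv_posSemidef d n g00 g01 g10 g11 A σ hA hσ.1)
      (conv_one_left d n g00 g01 g10 g11 h00 h11 hdet σ hσ.2)
      (fun A => (conv_trace d n g00 g01 g10 g11 hdet A σ).trans (by rw [hσ.2, mul_one])) ρ hρ α
  · exact renyi_mono (convRight d n g00 g01 g10 g11 hdet ρ)
      (fun A hA => conv_posSemidef d n g00 g01 g10 g11 ρ A hρ.1 hA)
      (conv_one_right d n g00 g01 g10 g11 h01 h10 hdet ρ hρ.2)
      (fun A => (conv_trace d n g00 g01 g10 g11 hdet ρ A).trans (by rw [hρ.2, one_mul])) σ hσ α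


end PaperQI
end
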